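/- arXiv:1412.8161 — 2 statements merged into one kernel-verified Lean document; each statement's English description precedes it below -/
import Mathlib

section
/- Suppose X ~ N_n(θ₀, I_n) and consider the one-group shrinkage prior with 1/2 ≤ a < 1 applied independently to each coordinate. Let (p_n) be a sequence with p_n → ∞ and p_n = o(n), fix α ≥ 1, and set τ_n = (p_n/n)^α. Then for every sequence M_n → ∞, sup_{θ₀ ∈ l₀[p_n]} E_{θ₀} Π( θ ∈ ℝⁿ : ||θ − θ₀||² > M_n p_n log(n/p_n) | X ) → 0 as n → ∞. -/
open MeasureTheory Filter Set

noncomputable section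

namespace OneGroup

/-- A one-group (global-local) shrinkage prior: the local variance `λ²` has density
`π(λ²) = K (λ²)^{-a-1} L(λ²)` on `(0,∞)`, where `L` is a positive, measurable,
non-constant slowly varying function, bounded above by `M`, and bounded below by
`c₀` on `[t₀, ∞)`. -/
structure Prior where
  K : ℝ
  a : ℝ
  L : ℝ → ℝ
  M : ℝ
  c₀ : ℝ
  t₀ : ℝ
  K_pos : 0 < K
  a_pos : 0 < a
  L_pos : ∀ t : ℝ, 0 < t → 0 < L t
  L_meas : Measurable L
  L_slow : ∀ c : ℝ, 0 < c → Tendsto (fun t => L (c * t) / L t) atTop (nhds 1)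
  L_nonconst : ∃ s : ℝ, 0 < s ∧ ∃ t : ℝ, 0 < t ∧ L s ≠ L t
  M_pos : 0 < M
  L_le : ∀ t : ℝ, 0 < t → L t ≤ M
  c₀_pos : 0 < c₀
  t₀_pos : 0 < t₀
  L_ge : ∀ t : ℝ, t₀ ≤ t → c₀ ≤ L t

/-- The (unnormalized) posterior weight, as a function of `t = λ²`, entering all
posterior expectations of functions of the shrinkage coefficient `κ = 1/(1+tτ²)`. -/
def wt (P : Prior) (x τ t : ℝ) : ℝ :=
  (1 + t * τ ^ 2) ^ (-(1:ℝ)/2) * t ^ (-P.a - 1) * P.L t *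
    Real.exp (-x ^ 2 / (2 * (1 + t * τ ^ 2)))

/-- Posterior expectation `E(g(κ) | x, τ)` of a function `g` of the shrinkage
coefficient `κ = 1/(1+λ²τ²)`. -/
def postExp (P : Prior) (g : ℝ → ℝ) (x τ : ℝ) : ℝ :=
  (∫ t in Ioi (0:ℝ), g (1 / (1 + t * τ ^ 2)) * wt P x τ t) /
    (∫ t in Ioi (0:ℝ), wt P x τ t)

/-- The posterior mean `T_τ(x) = x (1 - E(κ | x, τ))`. -/
def T (P : Prior) (τ x : ℝ) : ℝ := x * (1 - postExp P (fun κ => κ) x τ)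

/-- The marginal prior density `p_τ(θ)` of `θ`. -/
def pdens (P : Prior) (τ θ : ℝ) : ℝ :=
  ∫ u in Ioi (0:ℝ),
    (Real.sqrt (2 * Real.pi * u * τ ^ 2))⁻¹ * Real.exp (-θ ^ 2 / (2 * u * τ ^ 2)) *
      (P.K * u ^ (-P.a - 1) * P.L u)

/-- The unnormalized posterior density of `θ` given an observation `x ~ N(θ,1)`. -/
def postw (P : Prior) (τ x θ : ℝ) : ℝ := Real.exp (-(x - θ) ^ 2 / 2) * pdens P τ θ

/-- The `k`-th posterior moment of `θ` given `x`. -/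
def postMoment (P : Prior) (τ x : ℝ) (k : ℕ) : ℝ :=
  (∫ θ : ℝ, θ ^ k * postw P τ x θ) / (∫ θ : ℝ, postw P τ x θ)

/-- The posterior variance `Var(θ | x)`. -/
def postVar (P : Prior) (τ x : ℝ) : ℝ := postMoment P τ x 2 - (postMoment P τ x 1) ^ 2

/-- The standard normal density. -/
def gauss (z : ℝ) : ℝ := (Real.sqrt (2 * Real.pi))⁻¹ * Real.exp (-z ^ 2 / 2)

/-- Expectation of `f(X)` for `X ~ N(θ, 1)`. -/
def E1 (θ : ℝ) (f : ℝ → ℝ) : ℝ := ∫ x : ℝ, f x * gauss (x - θ)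

/-- Expectation of `f(X)` for `X ~ N_n(θ, I_n)`. -/
def EN (n : ℕ) (θ : Fin n → ℝ) (f : (Fin n → ℝ) → ℝ) : ℝ :=
  ∫ x : Fin n → ℝ, f x * ∏ i, gauss (x i - θ i)

/-- The posterior probability `Π(A | x)` of a set `A ⊆ ℝⁿ` given data `x`,
for the coordinatewise-independent posterior. -/
def postProb (P : Prior) (τ : ℝ) {n : ℕ} (x : Fin n → ℝ) (A : Set (Fin n → ℝ)) : ℝ :=
  (∫ θ in A, ∏ i, postw P τ (x i) (θ i)) /
    (∫ θ : Fin n → ℝ, ∏ i, postw P τ (x i) (θ i))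

/-- The set `l₀[p]` of nearly black vectors in `ℝⁿ`. -/
def nearlyBlack (n p : ℕ) : Set (Fin n → ℝ) :=
  {θ | (Finset.univ.filter fun i => θ i ≠ 0).card ≤ p}

end OneGroup

open OneGroup

section Helpers

open MeasureTheory Filter Set ProbabilityTheory OneGroup

namespace OneGroup

lemma gauss_moment (A B c μ v : ℝ) (hv : 0 < v) :
    Integrable (fun θ : ℝ => (A + B * (θ - c) ^ 2) *
      ((Real.sqrt (2 * Real.pi * v))⁻¹ * Real.exp (-(θ - μ) ^ 2 / (2 * v)))) ∧
    ∫ θ : ℝ, (A + B * (θ - c) ^ 2) *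
      ((Real.sqrt (2 * Real.pi * v))⁻¹ * Real.exp (-(θ - μ) ^ 2 / (2 * v)))
      = A + B * ((μ - c) ^ 2 + v) := by
  set w : NNReal := ⟨v, hv.le⟩ with hw
  have hwv : (w : ℝ) = v := rfl
  have hw0 : w ≠ 0 := by
    intro h
    have : (w : ℝ) = 0 := by rw [h]; rfl
    rw [hwv] at this; exact hv.ne' this
  have hpdf : ∀ θ, (Real.sqrt (2 * Real.pi * v))⁻¹ * Real.exp (-(θ - μ) ^ 2 / (2 * v))
      = gaussianPDFReal μ w θ := by
    intro θ; rw [gaussianPDFReal_def, hwv]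
  have hid : MemLp (fun x : ℝ => x) 2 (gaussianReal μ w) := by
    have := memLp_id_gaussianReal (μ := μ) (v := w) 2
    simpa [Function.id_def] using this
  have hsub : ∀ d : ℝ, MemLp (fun x : ℝ => x - d) 2 (gaussianReal μ w) := fun d =>
    hid.sub (memLp_const d)
  have hint2 : ∀ d : ℝ, Integrable (fun x : ℝ => (x - d) ^ 2) (gaussianReal μ w) := fun d =>
    (hsub d).integrable_sq
  have hInt0 : Integrable (fun x : ℝ => A + B * (x - c) ^ 2) (gaussianReal μ w) :=
    (integrable_const A).add ((hint2 c).const_mul B)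
  have hI1 : Integrable (fun x : ℝ => x) (gaussianReal μ w) := hid.integrable (by norm_num)
  have hvar : ∫ x, (x - μ) ^ 2 ∂gaussianReal μ w = v := by
    have h := variance_fun_id_gaussianReal (μ := μ) (v := w)
    rw [variance_eq_integral (by fun_prop)] at h
    rw [hwv] at h
    simpa [integral_id_gaussianReal] using h
  have hval : ∫ x, (A + B * (x - c) ^ 2) ∂gaussianReal μ w = A + B * ((μ - c) ^ 2 + v) := by
    have e : ∀ x : ℝ, A + B * (x - c) ^ 2 =
        (A + B * (c ^ 2 - μ ^ 2)) + (B * (x - μ) ^ 2 + (2 * B * (μ - c)) * x) := by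
      intro x; ring
    simp_rw [e]
    have h3 : Integrable (fun x : ℝ => B * (x - μ) ^ 2 + (2 * B * (μ - c)) * x)
        (gaussianReal μ w) := ((hint2 μ).const_mul B).add (hI1.const_mul _)
    rw [integral_add (integrable_const _) h3,
      integral_add ((hint2 μ).const_mul B) (hI1.const_mul _), integral_const_mul,
      integral_const_mul, hvar, integral_id_gaussianReal]
    simp
    ring
  simp_rw [hpdf]
  constructor
  · rw [gaussianReal_of_var_ne_zero _ hw0,
      integrable_withDensity_iff_integrable_smul' (measurable_gaussianPDF μ w)
        (ae_of_all _ fun _ => gaussianPDF_lt_top)] at hInt0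
    refine hInt0.congr (ae_of_all _ fun x => ?_)
    simp only [toReal_gaussianPDF, smul_eq_mul]
    ring
  · rw [← hval, integral_gaussianReal_eq_integral_smul hw0]
    refine integral_congr_ae (ae_of_all _ fun x => ?_)
    simp only [smul_eq_mul]
    ring

/-- joint (unnormalised) density of `(u, θ)`. -/
def jd (P : Prior) (τ x : ℝ) (u θ : ℝ) : ℝ :=
  Real.exp (-(x - θ) ^ 2 / 2) * ((Real.sqrt (2 * Real.pi * u * τ ^ 2))⁻¹ *
    Real.exp (-θ ^ 2 / (2 * u * τ ^ 2)) * (P.K * u ^ (-P.a - 1) * P.L u))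

lemma postw_eq (P : Prior) (τ x θ : ℝ) : postw P τ x θ = ∫ u in Ioi (0:ℝ), jd P τ x u θ := by
  unfold postw pdens jd
  rw [integral_const_mul]

lemma jd_nonneg (P : Prior) (τ x u θ : ℝ) (hu : 0 < u) : 0 ≤ jd P τ x u θ := by
  have h1 := P.L_pos u hu
  have h2 := P.K_pos
  unfold jd
  positivity

lemma wt_nonneg (P : Prior) (τ x u : ℝ) (hu : 0 < u) : 0 ≤ wt P x τ u := by
  have h1 := P.L_pos u hu
  unfold wt
  positivity

lemma postw_nonneg (P : Prior) (τ x θ : ℝ) : 0 ≤ postw P τ x θ := by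
  rw [postw_eq]
  exact setIntegral_nonneg measurableSet_Ioi fun u hu => jd_nonneg P τ x u θ hu

lemma jd_factor (P : Prior) (τ x u θ : ℝ) (hτ : 0 < τ) (hu : 0 < u) :
    jd P τ x u θ = P.K * wt P x τ u *
      ((Real.sqrt (2 * Real.pi * (u * τ ^ 2 / (1 + u * τ ^ 2))))⁻¹ *
        Real.exp (-(θ - u * τ ^ 2 / (1 + u * τ ^ 2) * x) ^ 2 /
          (2 * (u * τ ^ 2 / (1 + u * τ ^ 2))))) := by
  have hs : 0 < u * τ ^ 2 := by positivity
  unfold jd wt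
  have e1 : (2 * Real.pi * u * τ ^ 2) = 2 * Real.pi * (u * τ ^ 2) := by ring
  have e2 : (2 * u * τ ^ 2) = 2 * (u * τ ^ 2) := by ring
  rw [e1, e2]
  generalize u * τ ^ 2 = s at hs ⊢
  have h1s : 0 < 1 + s := by linarith
  have hsq : (Real.sqrt (2 * Real.pi * s))⁻¹ =
      (1 + s) ^ (-(1:ℝ) / 2) * (Real.sqrt (2 * Real.pi * (s / (1 + s))))⁻¹ := by
    have : 2 * Real.pi * s = (1 + s) * (2 * Real.pi * (s / (1 + s))) := by field_simp
    rw [this, Real.sqrt_mul h1s.le, mul_inv]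
    congr 1
    rw [Real.sqrt_eq_rpow, ← Real.rpow_neg h1s.le]
    norm_num
  have hexp : Real.exp (-(x - θ) ^ 2 / 2) * Real.exp (-θ ^ 2 / (2 * s)) =
      Real.exp (-x ^ 2 / (2 * (1 + s))) *
        Real.exp (-(θ - s / (1 + s) * x) ^ 2 / (2 * (s / (1 + s)))) := by
    rw [← Real.exp_add, ← Real.exp_add]
    congr 1
    field_simp
    ring
  rw [hsq]
  calc _ = (Real.exp (-(x - θ) ^ 2 / 2) * Real.exp (-θ ^ 2 / (2 * s))) *
        ((1 + s) ^ (-(1:ℝ) / 2) * (Real.sqrt (2 * Real.pi * (s / (1 + s))))⁻¹ *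
          (P.K * u ^ (-P.a - 1) * P.L u)) := by ring
    _ = _ := by rw [hexp]; ring

/-- conditional moment -/
def cm (τ x A B c u : ℝ) : ℝ :=
  A + B * ((u * τ ^ 2 / (1 + u * τ ^ 2) * x - c) ^ 2 + u * τ ^ 2 / (1 + u * τ ^ 2))

lemma jd_inner (P : Prior) (τ x A B c u : ℝ) (hτ : 0 < τ) (hu : 0 < u) :
    Integrable (fun θ : ℝ => (A + B * (θ - c) ^ 2) * jd P τ x u θ) ∧
    ∫ θ : ℝ, (A + B * (θ - c) ^ 2) * jd P τ x u θ = P.K * (wt P x τ u * cm τ x A B c u) := by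
  have hs : 0 < u * τ ^ 2 := by positivity
  obtain ⟨h1, h2⟩ := gauss_moment A B c (u * τ ^ 2 / (1 + u * τ ^ 2) * x)
    (u * τ ^ 2 / (1 + u * τ ^ 2)) (by positivity)
  have e : (fun θ : ℝ => (A + B * (θ - c) ^ 2) * jd P τ x u θ) = fun θ =>
      (P.K * wt P x τ u) * ((A + B * (θ - c) ^ 2) *
      ((Real.sqrt (2 * Real.pi * (u * τ ^ 2 / (1 + u * τ ^ 2))))⁻¹ *
        Real.exp (-(θ - u * τ ^ 2 / (1 + u * τ ^ 2) * x) ^ 2 /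
          (2 * (u * τ ^ 2 / (1 + u * τ ^ 2)))))) := by
    funext θ
    rw [jd_factor P τ x u θ hτ hu]; ring
  rw [e]
  refine ⟨h1.const_mul _, ?_⟩
  rw [integral_const_mul, h2, cm]
  ring

lemma jd_meas (P : Prior) (τ x A B c : ℝ) : Measurable (fun z : ℝ × ℝ =>
    (A + B * (z.2 - c) ^ 2) * jd P τ x z.1 z.2) := by
  have := P.L_meas
  unfold jd
  fun_prop

lemma wt_meas (P : Prior) (τ x : ℝ) : Measurable (wt P x τ) := by
  have := P.L_meas
  unfold wt
  fun_prop

/-- properness of the prior -/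
def Proper (P : Prior) : Prop := IntegrableOn (fun u : ℝ => u ^ (-P.a - 1) * P.L u) (Ioi 0)

lemma wt_le (P : Prior) (τ x u : ℝ) (hu : 0 < u) : wt P x τ u ≤ u ^ (-P.a - 1) * P.L u := by
  have hL := P.L_pos u hu
  have h1 : (1:ℝ) ≤ 1 + u * τ ^ 2 := by nlinarith [sq_nonneg τ, mul_nonneg hu.le (sq_nonneg τ)]
  have hr : (1 + u * τ ^ 2) ^ (-(1:ℝ)/2) ≤ 1 := Real.rpow_le_one_of_one_le_of_nonpos h1 (by norm_num)
  have he : Real.exp (-x ^ 2 / (2 * (1 + u * τ ^ 2))) ≤ 1 := by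
    rw [Real.exp_le_one_iff]
    apply div_nonpos_of_nonpos_of_nonneg
    · nlinarith [sq_nonneg x]
    · linarith
  have hp : 0 ≤ u ^ (-P.a - 1) * P.L u := by positivity
  unfold wt
  calc _ = ((1 + u * τ ^ 2) ^ (-(1:ℝ)/2) * Real.exp (-x ^ 2 / (2 * (1 + u * τ ^ 2)))) *
      (u ^ (-P.a - 1) * P.L u) := by ring
    _ ≤ 1 * (u ^ (-P.a - 1) * P.L u) := by
        apply mul_le_mul_of_nonneg_right _ hp
        apply mul_le_one₀ hr (by positivity) he
    _ = _ := one_mul _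

lemma wt_integrable (P : Prior) (hP : Proper P) (τ x : ℝ) : IntegrableOn (wt P x τ) (Ioi 0) := by
  refine Integrable.mono' hP (wt_meas P τ x).aestronglyMeasurable ?_
  refine (ae_restrict_iff' measurableSet_Ioi).2 (ae_of_all _ fun u hu => ?_)
  rw [Real.norm_eq_abs, abs_of_nonneg (wt_nonneg P τ x u hu)]
  exact wt_le P τ x u hu

lemma m_bounds (τ u : ℝ) (hu : 0 < u) :
    0 ≤ u * τ ^ 2 / (1 + u * τ ^ 2) ∧ u * τ ^ 2 / (1 + u * τ ^ 2) ≤ 1 := by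
  have hs : 0 ≤ u * τ ^ 2 := by positivity
  refine ⟨by positivity, ?_⟩
  rw [div_le_one (by linarith)]; linarith

lemma cm_nonneg (τ x A B c u : ℝ) (hu : 0 < u) (hA : 0 ≤ A) (hB : 0 ≤ B) : 0 ≤ cm τ x A B c u := by
  have := (m_bounds τ u hu).1
  unfold cm
  positivity

lemma cm_le (τ x A B c u : ℝ) (hu : 0 < u) (hB : 0 ≤ B) :
    cm τ x A B c u ≤ A + B * (2 * x ^ 2 + 2 * c ^ 2 + 1) := by
  obtain ⟨h0, h1⟩ := m_bounds τ u hu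
  unfold cm
  generalize u * τ ^ 2 / (1 + u * τ ^ 2) = m at *
  have : (m * x - c) ^ 2 + m ≤ 2 * x ^ 2 + 2 * c ^ 2 + 1 := by
    have h2 : m ^ 2 ≤ 1 := by nlinarith
    nlinarith [sq_nonneg (m * x + c), mul_le_mul_of_nonneg_right h2 (sq_nonneg x)]
  nlinarith

lemma wcm_integrable (P : Prior) (hP : Proper P) (τ x A B c : ℝ) (hA : 0 ≤ A) (hB : 0 ≤ B) :
    IntegrableOn (fun u => wt P x τ u * cm τ x A B c u) (Ioi 0) := by
  refine Integrable.mono' ((wt_integrable P hP τ x).mul_const (A + B * (2 * x ^ 2 + 2 * c ^ 2 + 1)))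
    ?_ ?_
  · have := wt_meas P τ x
    unfold cm
    apply Measurable.aestronglyMeasurable
    fun_prop
  refine (ae_restrict_iff' measurableSet_Ioi).2 (ae_of_all _ fun u hu => ?_)
  have h0 := wt_nonneg P τ x u hu
  rw [Real.norm_eq_abs, abs_of_nonneg (mul_nonneg h0 (cm_nonneg τ x A B c u hu hA hB))]
  exact mul_le_mul_of_nonneg_left (cm_le τ x A B c u hu hB) h0

lemma jd_norm (P : Prior) (τ x A B c u θ : ℝ) (hu : 0 < u) (hA : 0 ≤ A) (hB : 0 ≤ B) :
    ‖(A + B * (θ - c) ^ 2) * jd P τ x u θ‖ = (A + B * (θ - c) ^ 2) * jd P τ x u θ := by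
  rw [Real.norm_eq_abs, abs_of_nonneg]
  have := jd_nonneg P τ x u θ hu
  positivity

lemma jd_integrable (P : Prior) (hP : Proper P) (τ x A B c : ℝ) (hτ : 0 < τ) (hA : 0 ≤ A)
    (hB : 0 ≤ B) : Integrable (fun z : ℝ × ℝ =>
    (A + B * (z.2 - c) ^ 2) * jd P τ x z.1 z.2) ((volume.restrict (Ioi 0)).prod volume) := by
  rw [integrable_prod_iff (jd_meas P τ x A B c).aestronglyMeasurable]
  constructor
  · exact (ae_restrict_iff' measurableSet_Ioi).2 (ae_of_all _ fun u hu =>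
      (jd_inner P τ x A B c u hτ hu).1)
  · have : IntegrableOn (fun u => P.K * (wt P x τ u * cm τ x A B c u)) (Ioi 0) :=
      (wcm_integrable P hP τ x A B c hA hB).const_mul P.K
    refine Integrable.congr this ?_
    refine (ae_restrict_iff' measurableSet_Ioi).2 (ae_of_all _ fun u hu => ?_)
    simp only
    rw [← (jd_inner P τ x A B c u hτ hu).2]
    refine integral_congr_ae (ae_of_all _ fun θ => ?_)
    simp only
    rw [jd_norm P τ x A B c u θ hu hA hB]

lemma postw_moment (P : Prior) (hP : Proper P) (τ x A B c : ℝ) (hτ : 0 < τ) (hA : 0 ≤ A)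
    (hB : 0 ≤ B) :
    Integrable (fun θ => (A + B * (θ - c) ^ 2) * postw P τ x θ) ∧
    ∫ θ, (A + B * (θ - c) ^ 2) * postw P τ x θ =
      P.K * ∫ u in Ioi (0:ℝ), wt P x τ u * cm τ x A B c u := by
  have hI := jd_integrable P hP τ x A B c hτ hA hB
  have e : ∀ θ, (A + B * (θ - c) ^ 2) * postw P τ x θ =
      ∫ u in Ioi (0:ℝ), (A + B * (θ - c) ^ 2) * jd P τ x u θ := by
    intro θ; rw [postw_eq, integral_const_mul]
  simp_rw [e]
  refine ⟨hI.integral_prod_right, ?_⟩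
  rw [← integral_integral_swap (f := fun u θ => (A + B * (θ - c) ^ 2) * jd P τ x u θ) hI,
    ← integral_const_mul]
  refine setIntegral_congr_fun measurableSet_Ioi fun u hu => ?_
  exact (jd_inner P τ x A B c u hτ hu).2

end OneGroup

namespace OneGroup

lemma rpow_exp_bound (k b : ℝ) (hk : 0 < k) (hb : 0 < b) :
    ∃ C : ℝ, 0 < C ∧ ∀ z : ℝ, 0 < z → z ^ k * Real.exp (-(b * z)) ≤ C := by
  refine ⟨(k / b) ^ k, by positivity, fun z hz => ?_⟩
  have h1 : b * z / k ≤ Real.exp (b * z / k) := by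
    linarith [Real.add_one_le_exp (b * z / k)]
  have h2 : (b * z / k) ^ k ≤ Real.exp (b * z) := by
    calc (b * z / k) ^ k ≤ (Real.exp (b * z / k)) ^ k :=
          Real.rpow_le_rpow (by positivity) h1 hk.le
      _ = Real.exp (b * z) := by
          rw [← Real.exp_mul]; congr 1; field_simp
  have h3 : z ^ k = (k / b) ^ k * (b * z / k) ^ k := by
    rw [← Real.mul_rpow (by positivity) (by positivity)]
    congr 1; field_simp
  rw [h3, Real.exp_neg]
  have := Real.exp_pos (b * z)
  calc (k / b) ^ k * (b * z / k) ^ k * (Real.exp (b * z))⁻¹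
      ≤ (k / b) ^ k * Real.exp (b * z) * (Real.exp (b * z))⁻¹ := by gcongr
    _ = (k / b) ^ k := by field_simp

lemma jd_int_u (P : Prior) (τ x θ : ℝ) (hτ : 0 < τ) (hθ : θ ≠ 0) :
    IntegrableOn (fun u => jd P τ x u θ) (Ioi 0) := by
  have hLm := P.L_meas
  have hmeas : Measurable (fun u => jd P τ x u θ) := by
    unfold jd; fun_prop
  have hM := P.M_pos
  have hK := P.K_pos
  have ha := P.a_pos
  rw [← Ioc_union_Ioi_eq_Ioi (zero_le_one (α := ℝ))]
  apply IntegrableOn.union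
  · obtain ⟨C, hC, hCz⟩ := rpow_exp_bound (P.a + 3/2) (θ ^ 2 / (2 * τ ^ 2)) (by linarith)
      (by positivity)
    refine Measure.integrableOn_of_bounded (M := (Real.sqrt (2 * Real.pi * τ ^ 2))⁻¹ * P.K * P.M * C)
      (by simp) hmeas.aestronglyMeasurable ?_
    refine (ae_restrict_iff' measurableSet_Ioc).2 (ae_of_all _ fun u hu => ?_)
    have hu0 : 0 < u := hu.1
    have hL := P.L_pos u hu0
    rw [Real.norm_eq_abs, abs_of_nonneg (jd_nonneg P τ x u θ hu0)]
    unfold jd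
    have h1 : Real.exp (-(x - θ) ^ 2 / 2) ≤ 1 := by
      rw [Real.exp_le_one_iff]; nlinarith [sq_nonneg (x - θ)]
    have h2 : (Real.sqrt (2 * Real.pi * u * τ ^ 2))⁻¹ =
        (Real.sqrt (2 * Real.pi * τ ^ 2))⁻¹ * u ^ (-(1:ℝ)/2) := by
      have : 2 * Real.pi * u * τ ^ 2 = (2 * Real.pi * τ ^ 2) * u := by ring
      rw [this, Real.sqrt_mul (by positivity), mul_inv]
      congr 1
      rw [Real.sqrt_eq_rpow, ← Real.rpow_neg hu0.le]; norm_num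
    have h3 := hCz u⁻¹ (by positivity)
    have h4 : (u⁻¹) ^ (P.a + 3/2) = u ^ (-(1:ℝ)/2) * u ^ (-P.a - 1) := by
      rw [← Real.rpow_add hu0, Real.inv_rpow hu0.le, ← Real.rpow_neg hu0.le]
      congr 1; ring
    have h5 : -(θ ^ 2 / (2 * τ ^ 2) * u⁻¹) = -θ ^ 2 / (2 * u * τ ^ 2) := by
      field_simp
    rw [h4, h5] at h3
    rw [h2]
    calc _ ≤ 1 * ((Real.sqrt (2 * Real.pi * τ ^ 2))⁻¹ * u ^ (-(1:ℝ)/2) *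
          Real.exp (-θ ^ 2 / (2 * u * τ ^ 2)) * (P.K * u ^ (-P.a - 1) * P.M)) := by
          gcongr
          exact P.L_le u hu0
      _ = (Real.sqrt (2 * Real.pi * τ ^ 2))⁻¹ * P.K * P.M * (u ^ (-(1:ℝ)/2) * u ^ (-P.a - 1) *
          Real.exp (-θ ^ 2 / (2 * u * τ ^ 2))) := by ring
      _ ≤ _ := by gcongr
  · have hi : IntegrableOn (fun u : ℝ => (Real.sqrt (2 * Real.pi * τ ^ 2))⁻¹ * P.K * P.M *
        u ^ (-P.a - 1)) (Ioi 1) :=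
      (integrableOn_Ioi_rpow_of_lt (by linarith) one_pos).const_mul _
    refine Integrable.mono' hi hmeas.aestronglyMeasurable ?_
    refine (ae_restrict_iff' measurableSet_Ioi).2 (ae_of_all _ fun u hu => ?_)
    have hu1 : 1 < u := hu
    have hu0 : 0 < u := by linarith
    have hL := P.L_pos u hu0
    rw [Real.norm_eq_abs, abs_of_nonneg (jd_nonneg P τ x u θ hu0)]
    unfold jd
    have h1 : Real.exp (-(x - θ) ^ 2 / 2) ≤ 1 := by
      rw [Real.exp_le_one_iff]; nlinarith [sq_nonneg (x - θ)]
    have h1' : Real.exp (-θ ^ 2 / (2 * u * τ ^ 2)) ≤ 1 := by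
      rw [Real.exp_le_one_iff]
      apply div_nonpos_of_nonpos_of_nonneg
      · nlinarith [sq_nonneg θ]
      · positivity
    have h2 : (Real.sqrt (2 * Real.pi * u * τ ^ 2))⁻¹ ≤ (Real.sqrt (2 * Real.pi * τ ^ 2))⁻¹ := by
      apply inv_anti₀
      · apply Real.sqrt_pos.2; positivity
      · apply Real.sqrt_le_sqrt
        have : 0 < 2 * Real.pi * τ ^ 2 := by positivity
        nlinarith
    calc _ ≤ 1 * ((Real.sqrt (2 * Real.pi * τ ^ 2))⁻¹ * 1 * (P.K * u ^ (-P.a - 1) * P.M)) := by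
          gcongr
          exact P.L_le u hu0
      _ = _ := by ring

lemma improper_zero (P : Prior) (hP : ¬ Proper P) (τ x : ℝ) (hτ : 0 < τ) :
    ∫ θ, postw P τ x θ = 0 := by
  by_contra hne
  have hI : Integrable (postw P τ x) := by
    by_contra h
    exact hne (integral_undef h)
  apply hP
  have hM := P.M_pos
  have ha := P.a_pos
  have hLm := P.L_meas
  have hprod : Integrable (fun z : ℝ × ℝ => jd P τ x z.1 z.2)
      ((volume.restrict (Ioi 0)).prod volume) := by
    have hm := jd_meas P τ x 1 0 0
    simp only [zero_mul, add_zero, one_mul] at hm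
    rw [integrable_prod_iff' hm.aestronglyMeasurable]
    constructor
    · have : ∀ᵐ θ : ℝ, θ ≠ 0 := by
        simp [ae_iff]
      filter_upwards [this] with θ hθ
      exact jd_int_u P τ x θ hτ hθ
    · refine hI.congr (ae_of_all _ fun θ => ?_)
      rw [postw_eq]
      refine setIntegral_congr_fun measurableSet_Ioi fun u hu => ?_
      simp only
      rw [Real.norm_eq_abs, abs_of_nonneg (jd_nonneg P τ x u θ hu)]
  have hw : IntegrableOn (fun u => P.K * wt P x τ u) (Ioi 0) := by
    refine Integrable.congr hprod.integral_prod_left ?_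
    refine (ae_restrict_iff' measurableSet_Ioi).2 (ae_of_all _ fun u hu => ?_)
    have := (jd_inner P τ x 1 0 0 u hτ hu).2
    simp only [zero_mul, add_zero, one_mul, cm, mul_one] at this
    exact this
  have hmeas : Measurable (fun u : ℝ => u ^ (-P.a - 1) * P.L u) := by fun_prop
  unfold Proper
  rw [← Ioc_union_Ioi_eq_Ioi (zero_le_one (α := ℝ))]
  apply IntegrableOn.union
  · have hs : (0:ℝ) < 1 + τ ^ 2 := by positivity
    set q := P.K * ((1 + τ ^ 2) ^ (-(1:ℝ)/2) * Real.exp (-x ^ 2 / 2)) with hq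
    have hq0 : 0 < q := by have := P.K_pos; positivity
    have hi : IntegrableOn (fun u => q⁻¹ * (P.K * wt P x τ u)) (Ioc 0 1) :=
      (hw.mono_set Ioc_subset_Ioi_self).const_mul _
    refine Integrable.mono' hi hmeas.aestronglyMeasurable ?_
    refine (ae_restrict_iff' measurableSet_Ioc).2 (ae_of_all _ fun u hu => ?_)
    have hu0 : 0 < u := hu.1
    have hu1 : u ≤ 1 := hu.2
    have hL := P.L_pos u hu0
    have hK := P.K_pos
    rw [Real.norm_eq_abs, abs_of_nonneg (by positivity), ← div_eq_inv_mul, le_div_iff₀ hq0, hq]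
    unfold wt
    have hsu : 0 ≤ u * τ ^ 2 := by positivity
    have e1 : (1 + τ ^ 2) ^ (-(1:ℝ)/2) ≤ (1 + u * τ ^ 2) ^ (-(1:ℝ)/2) := by
      apply Real.rpow_le_rpow_of_nonpos (by positivity) _ (by norm_num)
      nlinarith [sq_nonneg τ]
    have e2 : Real.exp (-x ^ 2 / 2) ≤ Real.exp (-x ^ 2 / (2 * (1 + u * τ ^ 2))) := by
      apply Real.exp_le_exp.2
      rw [div_le_div_iff₀ (by norm_num) (by positivity)]
      nlinarith [mul_nonneg (sq_nonneg x) hsu]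
    calc _ = P.K * ((1 + τ ^ 2) ^ (-(1:ℝ)/2) * u ^ (-P.a - 1) * P.L u * Real.exp (-x ^ 2 / 2)) := by
          ring
      _ ≤ _ := by gcongr
  · have hi : IntegrableOn (fun u : ℝ => P.M * u ^ (-P.a - 1)) (Ioi 1) :=
      (integrableOn_Ioi_rpow_of_lt (by linarith) one_pos).const_mul _
    refine Integrable.mono' hi hmeas.aestronglyMeasurable ?_
    refine (ae_restrict_iff' measurableSet_Ioi).2 (ae_of_all _ fun u hu => ?_)
    have hu1 : 1 < u := hu
    have hu0 : 0 < u := by linarith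
    have hL := P.L_pos u hu0
    rw [Real.norm_eq_abs, abs_of_nonneg (by positivity), mul_comm]
    gcongr
    exact P.L_le u hu0

end OneGroup

namespace OneGroup

/-- normaliser -/
def DD (P : Prior) (τ x : ℝ) : ℝ := ∫ u in Ioi (0:ℝ), wt P x τ u

lemma DD_lower_aux (P : Prior) (hP : Proper P) (τ x l r m : ℝ) (hl : 0 < l) (hlr : l ≤ r)
    (h : ∀ u, l ≤ u → u ≤ r → m ≤ wt P x τ u) : m * (r - l) ≤ DD P τ x := by
  have hsub : Icc l r ⊆ Ioi (0:ℝ) := fun u hu => lt_of_lt_of_le hl hu.1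
  have hi := wt_integrable P hP τ x
  calc m * (r - l) = ∫ u in Icc l r, m := by
        rw [setIntegral_const]
        simp [Measure.real, hlr, mul_comm]
    _ ≤ ∫ u in Icc l r, wt P x τ u := by
        apply setIntegral_mono_on (by simp) (hi.mono_set hsub) measurableSet_Icc
        intro u hu; exact h u hu.1 hu.2
    _ ≤ DD P τ x := by
        apply setIntegral_mono_set hi
        · exact (ae_restrict_iff' measurableSet_Ioi).2 (ae_of_all _ fun u hu => wt_nonneg P τ x u hu)
        · exact hsub.eventuallyLE

lemma DD_lower0 (P : Prior) (hP : Proper P) : ∃ c : ℝ, 0 < c ∧ ∀ τ x : ℝ, 0 < τ → τ ≤ 1 →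
    c * Real.exp (-x ^ 2 / 2) ≤ DD P τ x := by
  have ht := P.t₀_pos
  have hc := P.c₀_pos
  have ha := P.a_pos
  refine ⟨(1 + (P.t₀ + 1)) ^ (-(1:ℝ)/2) * (P.t₀ + 1) ^ (-P.a - 1) * P.c₀, by positivity,
    fun τ x hτ hτ1 => ?_⟩
  have := DD_lower_aux P hP τ x P.t₀ (P.t₀ + 1)
    ((1 + (P.t₀ + 1)) ^ (-(1:ℝ)/2) * (P.t₀ + 1) ^ (-P.a - 1) * P.c₀ * Real.exp (-x ^ 2 / 2))
    ht (by linarith) ?_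
  · simpa using this
  intro u h1 h2
  have hu : 0 < u := by linarith
  have hL := P.L_pos u hu
  have hsu : 0 ≤ u * τ ^ 2 := by positivity
  have ht2 : τ ^ 2 ≤ 1 := by nlinarith
  have e1 : (1 + (P.t₀ + 1)) ^ (-(1:ℝ)/2) ≤ (1 + u * τ ^ 2) ^ (-(1:ℝ)/2) := by
    apply Real.rpow_le_rpow_of_nonpos (by positivity) _ (by norm_num)
    nlinarith
  have e3 : (P.t₀ + 1) ^ (-P.a - 1) ≤ u ^ (-P.a - 1) :=
    Real.rpow_le_rpow_of_nonpos hu h2 (by linarith)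
  have e2 : Real.exp (-x ^ 2 / 2) ≤ Real.exp (-x ^ 2 / (2 * (1 + u * τ ^ 2))) := by
    apply Real.exp_le_exp.2
    rw [div_le_div_iff₀ (by norm_num) (by positivity)]
    nlinarith [mul_nonneg (sq_nonneg x) hsu]
  have e4 := P.L_ge u h1
  unfold wt
  gcongr

lemma DD_pos (P : Prior) (hP : Proper P) (τ x : ℝ) (hτ : 0 < τ) (hτ1 : τ ≤ 1) :
    0 < DD P τ x := by
  obtain ⟨c, hc, h⟩ := DD_lower0 P hP
  exact lt_of_lt_of_le (by positivity) (h τ x hτ hτ1)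

lemma rpow_neg_half (y : ℝ) : (y ^ 2) ^ (-(1:ℝ)/2) = |y|⁻¹ := by
  have : (-(1:ℝ)/2) = -(1/2) := by norm_num
  rw [this, Real.rpow_neg (sq_nonneg y), ← Real.sqrt_eq_rpow, Real.sqrt_sq_eq_abs]

lemma DD_lower1 (P : Prior) (hP : Proper P) : ∃ c : ℝ, 0 < c ∧ ∀ τ x : ℝ, 0 < τ →
    P.t₀ * τ ^ 2 ≤ 1 → 1 ≤ x ^ 2 →
    c * ((x ^ 2 / τ ^ 2) ^ (-P.a) * |x|⁻¹) ≤ DD P τ x := by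
  have ht := P.t₀_pos
  have hc := P.c₀_pos
  have ha := P.a_pos
  refine ⟨(3:ℝ) ^ (-(1:ℝ)/2) * (2:ℝ) ^ (-P.a - 1) * P.c₀ * Real.exp (-(1/2)), by positivity,
    fun τ x hτ hτ1 hx => ?_⟩
  set T := x ^ 2 / τ ^ 2 with hT
  have hx0 : 0 < x ^ 2 := by linarith
  have hT0 : 0 < T := by positivity
  have hTt : P.t₀ ≤ T := by
    rw [hT, le_div_iff₀ (by positivity)]; linarith
  have hTτ : T * τ ^ 2 = x ^ 2 := by rw [hT]; field_simp
  have := DD_lower_aux P hP τ x T (2 * T)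
    ((3 * x ^ 2) ^ (-(1:ℝ)/2) * (2 * T) ^ (-P.a - 1) * P.c₀ * Real.exp (-(1/2)))
    hT0 (by linarith) ?_
  · refine le_trans (le_of_eq ?_) this
    rw [Real.mul_rpow (by norm_num) (by positivity), Real.mul_rpow (by norm_num) hT0.le,
      rpow_neg_half]
    have : T ^ (-P.a) = T ^ (-P.a - 1) * T := by
      rw [← Real.rpow_add_one hT0.ne']; congr 1; ring
    rw [this]; ring
  intro u h1 h2
  have hu : 0 < u := by linarith
  have hL := P.L_pos u hu
  have hs1 : x ^ 2 ≤ u * τ ^ 2 := by rw [← hTτ]; gcongr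
  have hs2 : u * τ ^ 2 ≤ 2 * x ^ 2 := by rw [← hTτ, ← mul_assoc]; gcongr
  have e1 : (3 * x ^ 2) ^ (-(1:ℝ)/2) ≤ (1 + u * τ ^ 2) ^ (-(1:ℝ)/2) := by
    apply Real.rpow_le_rpow_of_nonpos (by positivity) _ (by norm_num)
    linarith
  have e3 : (2 * T) ^ (-P.a - 1) ≤ u ^ (-P.a - 1) :=
    Real.rpow_le_rpow_of_nonpos hu h2 (by linarith)
  have e2 : Real.exp (-(1/2)) ≤ Real.exp (-x ^ 2 / (2 * (1 + u * τ ^ 2))) := by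
    apply Real.exp_le_exp.2
    rw [le_div_iff₀ (by positivity)]
    linarith
  have e4 := P.L_ge u (by linarith)
  unfold wt
  gcongr

lemma kap_pt (P : Prior) : ∃ C : ℝ, 0 < C ∧ ∀ τ x u : ℝ, 0 < τ → 1 ≤ x ^ 2 → 0 < u →
    x ^ 2 * (1 / (1 + u * τ ^ 2) * wt P x τ u) ≤ wt P x τ u +
      x ^ 2 * Real.exp (-x ^ 2 / 4) * (u ^ (-P.a - 1) * P.L u) +
      (Ioc 0 (x ^ 2 / τ ^ 2)).indicator
        (fun _ => C * ((x ^ 2 / τ ^ 2) ^ (-P.a - 1) * |x|⁻¹)) u := by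
  have ha := P.a_pos
  have hM := P.M_pos
  obtain ⟨C, hC, hz⟩ := rpow_exp_bound (P.a + 5/2) (1/2) (by linarith) (by norm_num)
  refine ⟨P.M * (2:ℝ) ^ (P.a + 1) * C, by positivity, fun τ x u hτ hx hu => ?_⟩
  set T := x ^ 2 / τ ^ 2 with hT
  have hx0 : 0 < x ^ 2 := by linarith
  have hxa : 0 < |x| := by
    rw [abs_pos]; rintro rfl; norm_num at hx0
  have hT0 : 0 < T := by positivity
  have hTτ : T * τ ^ 2 = x ^ 2 := by rw [hT]; field_simp
  have hL := P.L_pos u hu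
  have hw := wt_nonneg P τ x u hu
  have hs0 : 0 < u * τ ^ 2 := by positivity
  have hind : 0 ≤ (Ioc 0 T).indicator
        (fun _ => P.M * (2:ℝ) ^ (P.a + 1) * C * (T ^ (-P.a - 1) * |x|⁻¹)) u := by
    apply indicator_nonneg; intro _ _; positivity
  have hmid : 0 ≤ x ^ 2 * Real.exp (-x ^ 2 / 4) * (u ^ (-P.a - 1) * P.L u) := by positivity
  by_cases huT : u ≤ T
  · rw [indicator_of_mem (show u ∈ Ioc 0 T from ⟨hu, huT⟩)] at hind ⊢
    by_cases hs : u * τ ^ 2 ≤ 1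
    · have : x ^ 2 * (1 / (1 + u * τ ^ 2) * wt P x τ u) ≤
          x ^ 2 * Real.exp (-x ^ 2 / 4) * (u ^ (-P.a - 1) * P.L u) := by
        have k1 : 1 / (1 + u * τ ^ 2) ≤ 1 := by
          rw [div_le_one (by linarith)]; linarith
        have k2 : (1 + u * τ ^ 2) ^ (-(1:ℝ)/2) ≤ 1 :=
          Real.rpow_le_one_of_one_le_of_nonpos (by linarith) (by norm_num)
        have k3 : Real.exp (-x ^ 2 / (2 * (1 + u * τ ^ 2))) ≤ Real.exp (-x ^ 2 / 4) := by
          apply Real.exp_le_exp.2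
          rw [div_le_div_iff₀ (by positivity) (by norm_num)]
          nlinarith
        unfold wt
        calc _ ≤ x ^ 2 * (1 * (1 * u ^ (-P.a - 1) * P.L u * Real.exp (-x ^ 2 / 4))) := by gcongr
          _ = _ := by ring
      linarith
    · push Not at hs
      have : x ^ 2 * (1 / (1 + u * τ ^ 2) * wt P x τ u) ≤
          P.M * (2:ℝ) ^ (P.a + 1) * C * (T ^ (-P.a - 1) * |x|⁻¹) := by
        set z := x ^ 2 / (1 + u * τ ^ 2) with hzd
        have hz0 : 0 < z := by positivity
        have k1 : x ^ 2 * (1 / (1 + u * τ ^ 2)) = z := by rw [hzd]; ring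
        have k2 : (1 + u * τ ^ 2) ^ (-(1:ℝ)/2) = z ^ ((1:ℝ)/2) * |x|⁻¹ := by
          have : 1 + u * τ ^ 2 = x ^ 2 * z⁻¹ := by
            rw [hzd, inv_div, mul_div_cancel₀ _ hx0.ne']
          rw [this, Real.mul_rpow (by positivity) (by positivity), rpow_neg_half,
            Real.inv_rpow hz0.le, ← Real.rpow_neg hz0.le, mul_comm]
          norm_num
        have k3 : -x ^ 2 / (2 * (1 + u * τ ^ 2)) = -(1/2 * z) := by
          rw [hzd]; field_simp
        have k4 : u ^ (-P.a - 1) ≤ T ^ (-P.a - 1) * ((2:ℝ) ^ (P.a + 1) * z ^ (P.a + 1)) := by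
          have h1 : T / (2 * z) ≤ u := by
            rw [div_le_iff₀ (by positivity), hT, hzd, div_le_iff₀ (by positivity)]
            have : u * (2 * (x ^ 2 / (1 + u * τ ^ 2))) * τ ^ 2 =
                x ^ 2 * ((2 * (u * τ ^ 2)) / (1 + u * τ ^ 2)) := by field_simp
            rw [this]
            have : 1 ≤ (2 * (u * τ ^ 2)) / (1 + u * τ ^ 2) := by
              rw [le_div_iff₀ (by positivity)]; linarith
            nlinarith
          calc u ^ (-P.a - 1) ≤ (T / (2 * z)) ^ (-P.a - 1) :=
                Real.rpow_le_rpow_of_nonpos (by positivity) h1 (by linarith)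
            _ = _ := by
                rw [Real.div_rpow hT0.le (by positivity), ← Real.mul_rpow (by norm_num) hz0.le,
                  div_eq_mul_inv, ← Real.rpow_neg (by positivity)]
                congr 2; ring
        have k5 := hz z hz0
        have k6 : z ^ (P.a + 5/2) = z * z ^ ((1:ℝ)/2) * z ^ (P.a + 1) := by
          have : z * z ^ ((1:ℝ)/2) * z ^ (P.a + 1) = z ^ (1:ℝ) * z ^ ((1:ℝ)/2) * z ^ (P.a + 1) := by
            rw [Real.rpow_one]
          rw [this, ← Real.rpow_add hz0, ← Real.rpow_add hz0]
          congr 1; ring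
        rw [k6] at k5
        rw [← mul_assoc, k1]
        unfold wt
        rw [k2, k3]
        calc _ ≤ z * (z ^ ((1:ℝ)/2) * |x|⁻¹ * (T ^ (-P.a - 1) * ((2:ℝ) ^ (P.a + 1) * z ^ (P.a + 1)))
              * P.M * Real.exp (-(1/2 * z))) := by
              gcongr
              exact P.L_le u hu
          _ = P.M * (2:ℝ) ^ (P.a + 1) * (z * z ^ ((1:ℝ)/2) * z ^ (P.a + 1) *
              Real.exp (-(1/2 * z))) * (T ^ (-P.a - 1) * |x|⁻¹) := by ring
          _ ≤ _ := by gcongr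
      linarith
  · push Not at huT
    have hs1 : x ^ 2 ≤ u * τ ^ 2 := by rw [← hTτ]; gcongr
    have : x ^ 2 * (1 / (1 + u * τ ^ 2) * wt P x τ u) ≤ wt P x τ u := by
      rw [← mul_assoc]
      apply mul_le_of_le_one_left hw
      rw [mul_one_div, div_le_one (by positivity)]; linarith
    linarith

lemma kapwt_integrable (P : Prior) (hP : Proper P) (τ x : ℝ) :
    IntegrableOn (fun u => 1 / (1 + u * τ ^ 2) * wt P x τ u) (Ioi 0) := by
  have := wt_meas P τ x
  refine Integrable.mono' (wt_integrable P hP τ x) (by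
    apply Measurable.aestronglyMeasurable; fun_prop) ?_
  refine (ae_restrict_iff' measurableSet_Ioi).2 (ae_of_all _ fun u hu => ?_)
  have hu0 : 0 < u := hu
  have hw := wt_nonneg P τ x u hu
  have hs0 : 0 ≤ u * τ ^ 2 := by positivity
  rw [Real.norm_eq_abs, abs_of_nonneg (by positivity)]
  apply mul_le_of_le_one_left hw
  rw [div_le_one (by positivity)]; linarith

lemma exp_poly : ∃ C : ℝ, 0 < C ∧ ∀ x : ℝ, |x| ^ 5 * Real.exp (-x ^ 2 / 8) ≤ C := by
  obtain ⟨C, hC, h⟩ := rpow_exp_bound (5/2) (1/8) (by norm_num) (by norm_num)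
  refine ⟨C, hC, fun x => ?_⟩
  by_cases hx : x = 0
  · subst hx; simp; exact hC.le
  · have := h (x ^ 2) (by positivity)
    convert this using 2
    · rw [← sq_abs, ← Real.rpow_natCast |x| 2, ← Real.rpow_mul (abs_nonneg x),
        ← Real.rpow_natCast |x| 5]
      norm_num
    · congr 1; ring

lemma kappa_bound (P : Prior) (hP : Proper P) (ha1 : P.a < 1) : ∃ C : ℝ, 0 < C ∧ ∀ τ x : ℝ,
    0 < τ → P.t₀ * τ ^ 2 ≤ 1 → 1 ≤ Real.log (1 / τ) →
    x ^ 2 * ∫ u in Ioi (0:ℝ), 1 / (1 + u * τ ^ 2) * wt P x τ u ≤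
      C * Real.log (1 / τ) * DD P τ x := by
  have ha := P.a_pos
  obtain ⟨c1, hc1, hD⟩ := DD_lower1 P hP
  obtain ⟨C2, hC2, hpt⟩ := kap_pt P
  obtain ⟨C3, hC3, hpoly⟩ := exp_poly
  set I := ∫ u in Ioi (0:ℝ), u ^ (-P.a - 1) * P.L u with hI
  have hI0 : 0 ≤ I := setIntegral_nonneg measurableSet_Ioi fun u hu => by
    have hu0 : 0 < u := hu
    have := P.L_pos u hu
    positivity
  refine ⟨16 + (1 + (C3 * I + C2) / c1), by positivity, fun τ x hτ ht hΛ => ?_⟩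
  set Λ := Real.log (1 / τ) with hΛd
  have hτ1 : τ ≤ 1 := by
    by_contra hcon
    push Not at hcon
    have : Real.log (1 / τ) ≤ 0 := Real.log_nonpos (by positivity) (by
      rw [div_le_one hτ]; exact hcon.le)
    linarith
  have hD0 := DD_pos P hP τ x hτ hτ1
  have hki := kapwt_integrable P hP τ x
  have hwi := wt_integrable P hP τ x
  have hq : 0 ≤ (C3 * I + C2) / c1 := by positivity
  by_cases hx : x ^ 2 ≤ 16 * Λ
  · have h1 : ∫ u in Ioi (0:ℝ), 1 / (1 + u * τ ^ 2) * wt P x τ u ≤ DD P τ x := by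
      apply setIntegral_mono_on hki hwi measurableSet_Ioi
      intro u hu
      have hu0 : 0 < u := hu
      have hs0 : 0 ≤ u * τ ^ 2 := by positivity
      apply mul_le_of_le_one_left (wt_nonneg P τ x u hu)
      rw [div_le_one (by positivity)]; linarith
    calc _ ≤ x ^ 2 * DD P τ x := by gcongr
      _ ≤ (16 * Λ) * DD P τ x := by gcongr
      _ ≤ _ := by
        gcongr
        linarith
  · push Not at hx
    have hx1 : 1 ≤ x ^ 2 := by linarith
    set T := x ^ 2 / τ ^ 2 with hT
    have hx0 : 0 < x ^ 2 := by linarith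
    have hxa : 0 < |x| := by
      rw [abs_pos]; rintro rfl; norm_num at hx0
    have hT0 : 0 < T := by positivity
    have hDl := hD τ x hτ ht hx1
    rw [← hT] at hDl
    set g := T ^ (-P.a) * |x|⁻¹ with hg
    have hg0 : 0 < g := by positivity
    have hint3 : IntegrableOn ((Ioc 0 T).indicator
        (fun _ : ℝ => C2 * (T ^ (-P.a - 1) * |x|⁻¹))) (Ioi 0) := by
      rw [IntegrableOn, integrable_indicator_iff measurableSet_Ioc]
      apply integrableOn_const
      · rw [Measure.restrict_apply measurableSet_Ioc]
        exact ((measure_mono inter_subset_left).trans_lt measure_Ioc_lt_top).ne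
      · exact enorm_ne_top
    have hval3 : ∫ u in Ioi (0:ℝ), (Ioc 0 T).indicator
        (fun _ : ℝ => C2 * (T ^ (-P.a - 1) * |x|⁻¹)) u = C2 * g := by
      rw [setIntegral_indicator measurableSet_Ioc, inter_eq_right.2 Ioc_subset_Ioi_self,
        setIntegral_const]
      have : T ^ (-P.a) = T ^ (-P.a - 1) * T := by
        rw [← Real.rpow_add_one hT0.ne']; congr 1; ring
      rw [hg, this]
      simp [Measure.real, hT0.le]
      ring
    have hmain : x ^ 2 * ∫ u in Ioi (0:ℝ), 1 / (1 + u * τ ^ 2) * wt P x τ u ≤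
        DD P τ x + x ^ 2 * Real.exp (-x ^ 2 / 4) * I + C2 * g := by
      rw [← integral_const_mul, ← hval3, hI, ← integral_const_mul, DD]
      have hi2 : IntegrableOn (fun u : ℝ => x ^ 2 * Real.exp (-x ^ 2 / 4) *
        (u ^ (-P.a - 1) * P.L u)) (Ioi 0) := hP.const_mul _
      have hi12 : IntegrableOn (fun u : ℝ => wt P x τ u + x ^ 2 * Real.exp (-x ^ 2 / 4) *
        (u ^ (-P.a - 1) * P.L u)) (Ioi 0) := hwi.add hi2
      rw [← integral_add hwi hi2, ← integral_add hi12 hint3]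
      apply setIntegral_mono_on (hki.const_mul _) (hi12.add hint3) measurableSet_Ioi
      intro u hu
      exact hpt τ x u hτ hx1 hu
    have hexp : x ^ 2 * Real.exp (-x ^ 2 / 4) ≤ C3 * g := by
      have hT1 : 1 ≤ T := by
        rw [hT, le_div_iff₀ (by positivity)]; nlinarith
      have hTa : T ^ P.a ≤ T := by
        calc T ^ P.a ≤ T ^ (1:ℝ) := Real.rpow_le_rpow_of_exponent_le hT1 ha1.le
          _ = T := Real.rpow_one T
      have hτe : 1 / τ ^ 2 ≤ Real.exp (x ^ 2 / 8) := by
        have : 1 / τ ^ 2 = Real.exp (2 * Λ) := by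
          rw [two_mul, Real.exp_add, hΛd, Real.exp_log (by positivity)]
          field_simp
        rw [this]
        apply Real.exp_le_exp.2; linarith
      have hTb : T ≤ x ^ 2 * Real.exp (x ^ 2 / 8) := by
        rw [hT, div_eq_mul_one_div]; gcongr
      have hg' : g = (T ^ P.a * |x|)⁻¹ := by
        rw [hg, Real.rpow_neg hT0.le, mul_inv]
      rw [hg', ← div_eq_mul_inv, le_div_iff₀ (by positivity)]
      calc x ^ 2 * Real.exp (-x ^ 2 / 4) * (T ^ P.a * |x|)
          ≤ x ^ 2 * Real.exp (-x ^ 2 / 4) * ((x ^ 2 * Real.exp (x ^ 2 / 8)) * |x|) := by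
            gcongr; exact hTa.trans hTb
        _ = |x| ^ 5 * (Real.exp (-x ^ 2 / 4) * Real.exp (x ^ 2 / 8)) := by
            rw [← sq_abs x]; ring
        _ = |x| ^ 5 * Real.exp (-x ^ 2 / 8) := by
            rw [← Real.exp_add]; congr 2; ring
        _ ≤ C3 := hpoly x
    have hgD : g ≤ DD P τ x / c1 := by
      rw [le_div_iff₀ hc1]; linarith
    calc _ ≤ DD P τ x + x ^ 2 * Real.exp (-x ^ 2 / 4) * I + C2 * g := hmain
      _ ≤ DD P τ x + C3 * g * I + C2 * g := by gcongr
      _ = DD P τ x + (C3 * I + C2) * g := by ring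
      _ ≤ DD P τ x + (C3 * I + C2) * (DD P τ x / c1) := by gcongr
      _ = (1 + (C3 * I + C2) / c1) * 1 * DD P τ x := by ring
      _ ≤ _ := by
        gcongr
        · linarith
        · linarith

end OneGroup

namespace OneGroup

lemma m_int (P : Prior) (ha : 1/2 ≤ P.a) (ha1 : P.a < 1) (τ : ℝ) (hτ : 0 < τ) (hτ1 : τ ≤ 1) :
    IntegrableOn (fun u : ℝ => u * τ ^ 2 / (1 + u * τ ^ 2) * u ^ (-P.a - 1)) (Ioi 0) ∧
    ∫ u in Ioi (0:ℝ), u * τ ^ 2 / (1 + u * τ ^ 2) * u ^ (-P.a - 1) ≤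
      (1 / (1 - P.a) + 1 / P.a) * τ := by
  have ha0 := P.a_pos
  set T := (τ ^ 2)⁻¹ with hT
  have hT0 : 0 < T := by positivity
  have hm : Measurable (fun u : ℝ => u * τ ^ 2 / (1 + u * τ ^ 2) * u ^ (-P.a - 1)) := by fun_prop
  have hi1 : IntegrableOn (fun u : ℝ => τ ^ 2 * u ^ (-P.a)) (Ioc 0 T) := by
    have := (intervalIntegral.intervalIntegrable_rpow' (a := 0) (b := T) (r := -P.a) (by linarith))
    rw [intervalIntegrable_iff_integrableOn_Ioc_of_le hT0.le] at this
    exact this.const_mul _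
  have hi2 : IntegrableOn (fun u : ℝ => u ^ (-P.a - 1)) (Ioi T) :=
    integrableOn_Ioi_rpow_of_lt (by linarith) hT0
  have hb1 : ∀ u ∈ Ioc 0 T, u * τ ^ 2 / (1 + u * τ ^ 2) * u ^ (-P.a - 1) ≤ τ ^ 2 * u ^ (-P.a) := by
    intro u hu
    have hu0 : 0 < u := hu.1
    have : u ^ (-P.a) = u ^ (-P.a - 1) * u := by
      rw [← Real.rpow_add_one hu0.ne']; congr 1; ring
    rw [this]
    have h1 : u * τ ^ 2 / (1 + u * τ ^ 2) ≤ u * τ ^ 2 := by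
      apply div_le_self (by positivity)
      have : 0 ≤ u * τ ^ 2 := by positivity
      linarith
    calc _ ≤ u * τ ^ 2 * u ^ (-P.a - 1) := by gcongr
      _ = _ := by ring
  have hb2 : ∀ u ∈ Ioi T, u * τ ^ 2 / (1 + u * τ ^ 2) * u ^ (-P.a - 1) ≤ u ^ (-P.a - 1) := by
    intro u hu
    have hu0 : 0 < u := hT0.trans hu
    exact mul_le_of_le_one_left (by positivity) (m_bounds τ u hu0).2
  have hn : ∀ u : ℝ, 0 < u → 0 ≤ u * τ ^ 2 / (1 + u * τ ^ 2) * u ^ (-P.a - 1) := by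
    intro u hu; positivity
  have hI1 : IntegrableOn (fun u : ℝ => u * τ ^ 2 / (1 + u * τ ^ 2) * u ^ (-P.a - 1)) (Ioc 0 T) := by
    refine Integrable.mono' hi1 hm.aestronglyMeasurable ?_
    refine (ae_restrict_iff' measurableSet_Ioc).2 (ae_of_all _ fun u hu => ?_)
    rw [Real.norm_eq_abs, abs_of_nonneg (hn u hu.1)]
    exact hb1 u hu
  have hI2 : IntegrableOn (fun u : ℝ => u * τ ^ 2 / (1 + u * τ ^ 2) * u ^ (-P.a - 1)) (Ioi T) := by
    refine Integrable.mono' hi2 hm.aestronglyMeasurable ?_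
    refine (ae_restrict_iff' measurableSet_Ioi).2 (ae_of_all _ fun u hu => ?_)
    rw [Real.norm_eq_abs, abs_of_nonneg (hn u (hT0.trans hu))]
    exact hb2 u hu
  rw [← Ioc_union_Ioi_eq_Ioi hT0.le]
  refine ⟨hI1.union hI2, ?_⟩
  rw [setIntegral_union (Ioc_disjoint_Ioi le_rfl) measurableSet_Ioi hI1 hI2]
  have hTa : T ^ (-P.a) ≤ τ := by
    have : T ^ (-P.a) = τ ^ (2 * P.a) := by
      rw [hT, Real.inv_rpow (by positivity), ← Real.rpow_neg (by positivity), neg_neg,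
        Real.rpow_mul hτ.le]
      norm_num
    rw [this]
    calc τ ^ (2 * P.a) ≤ τ ^ (1:ℝ) := Real.rpow_le_rpow_of_exponent_ge hτ hτ1 (by linarith)
      _ = τ := Real.rpow_one τ
  have v1 : ∫ u in Ioc 0 T, τ ^ 2 * u ^ (-P.a) = 1 / (1 - P.a) * T ^ (-P.a) := by
    rw [integral_const_mul, ← intervalIntegral.integral_of_le hT0.le,
      integral_rpow (Or.inl (by linarith)), Real.zero_rpow (by linarith),
      Real.rpow_add_one hT0.ne', hT]
    have : -P.a + 1 ≠ 0 := by linarith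
    have : 1 - P.a ≠ 0 := by linarith
    have e : -P.a + 1 = 1 - P.a := by ring
    rw [e]
    field_simp
    simp
  have v2 : ∫ u in Ioi T, u ^ (-P.a - 1) = 1 / P.a * T ^ (-P.a) := by
    rw [integral_Ioi_rpow_of_lt (by linarith) hT0]
    have : -P.a - 1 + 1 = -P.a := by ring
    rw [this]; field_simp
  have s1 := setIntegral_mono_on hI1 hi1 measurableSet_Ioc hb1
  have s2 := setIntegral_mono_on hI2 hi2 measurableSet_Ioi hb2
  rw [v1] at s1
  rw [v2] at s2
  have q1 : 0 < 1 / (1 - P.a) := by apply one_div_pos.2; linarith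
  have q2 : 0 < 1 / P.a := by positivity
  calc _ ≤ 1 / (1 - P.a) * T ^ (-P.a) + 1 / P.a * T ^ (-P.a) := add_le_add s1 s2
    _ = (1 / (1 - P.a) + 1 / P.a) * T ^ (-P.a) := by ring
    _ ≤ _ := by gcongr

lemma m_pt (P : Prior) (τ x u : ℝ) (hu : 0 < u) :
    (1 + x ^ 2) * (u * τ ^ 2 / (1 + u * τ ^ 2) * wt P x τ u) ≤
      (1 + |x|) * P.M * (u * τ ^ 2 / (1 + u * τ ^ 2) * u ^ (-P.a - 1)) := by
  have hL := P.L_pos u hu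
  have hM := P.M_pos
  obtain ⟨hm0, -⟩ := m_bounds τ u hu
  have hs0 : 0 ≤ u * τ ^ 2 := by positivity
  unfold wt
  generalize u * τ ^ 2 = s at *
  have h1s : 0 < 1 + s := by linarith
  set r := Real.sqrt (1 + s) with hr
  have hr1 : 1 ≤ r := by rw [hr]; apply Real.one_le_sqrt.2; linarith
  have hr2 : r ^ 2 = 1 + s := Real.sq_sqrt h1s.le
  have hrp : (1 + s) ^ (-(1:ℝ)/2) = r⁻¹ := by
    rw [← hr2, rpow_neg_half, abs_of_pos (by linarith)]
  have hkey : (1 + x ^ 2) * Real.exp (-x ^ 2 / (2 * (1 + s))) ≤ (1 + |x|) * r := by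
    set y := |x| / r with hy
    have hy0 : 0 ≤ y := by positivity
    have hxy : |x| = y * r := by rw [hy]; field_simp
    have hx2 : x ^ 2 = y * r * |x| := by rw [← sq_abs, ← hxy]; ring
    have e : -x ^ 2 / (2 * (1 + s)) = -(y ^ 2 / 2) := by
      rw [← hr2, ← sq_abs x, hxy]; field_simp
    rw [e]
    have he1 : Real.exp (-(y ^ 2 / 2)) ≤ 1 := by
      rw [Real.exp_le_one_iff]; nlinarith
    have hye : y * Real.exp (-(y ^ 2 / 2)) ≤ 1 := by
      rw [Real.exp_neg, ← div_eq_mul_inv, div_le_one (Real.exp_pos _)]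
      nlinarith [Real.add_one_le_exp (y ^ 2 / 2), sq_nonneg (y - 1)]
    calc _ = Real.exp (-(y ^ 2 / 2)) + (y * Real.exp (-(y ^ 2 / 2))) * (r * |x|) := by
          rw [hx2]; ring
      _ ≤ 1 + 1 * (r * |x|) := by gcongr
      _ ≤ _ := by nlinarith [abs_nonneg x]
  rw [hrp]
  have hri : 0 < r⁻¹ := by positivity
  calc _ = ((1 + x ^ 2) * Real.exp (-x ^ 2 / (2 * (1 + s)))) * r⁻¹ *
        (s / (1 + s) * u ^ (-P.a - 1)) * P.L u := by ring
    _ ≤ ((1 + |x|) * r) * r⁻¹ * (s / (1 + s) * u ^ (-P.a - 1)) * P.M := by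
        gcongr
        exact P.L_le u hu
    _ = _ := by
        field_simp

lemma mwt_integrable (P : Prior) (hP : Proper P) (τ x : ℝ) :
    IntegrableOn (fun u => u * τ ^ 2 / (1 + u * τ ^ 2) * wt P x τ u) (Ioi 0) := by
  have := wt_meas P τ x
  refine Integrable.mono' (wt_integrable P hP τ x) (by
    apply Measurable.aestronglyMeasurable; fun_prop) ?_
  refine (ae_restrict_iff' measurableSet_Ioi).2 (ae_of_all _ fun u hu => ?_)
  have hw := wt_nonneg P τ x u hu
  obtain ⟨h0, h1⟩ := m_bounds τ u hu
  rw [Real.norm_eq_abs, abs_of_nonneg (by positivity)]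
  exact mul_le_of_le_one_left hw h1

/-- posterior mean squared distance to `c`. -/
def RR (P : Prior) (τ c x : ℝ) : ℝ :=
  (∫ θ, (θ - c) ^ 2 * postw P τ x θ) / (∫ θ, postw P τ x θ)

lemma postw_int (P : Prior) (hP : Proper P) (τ x : ℝ) (hτ : 0 < τ) :
    Integrable (postw P τ x) ∧ ∫ θ, postw P τ x θ = P.K * DD P τ x := by
  have h := postw_moment P hP τ x 1 0 0 hτ zero_le_one le_rfl
  simp only [zero_mul, add_zero, one_mul, cm, mul_one] at h
  exact h

lemma postw_int2 (P : Prior) (hP : Proper P) (τ x c : ℝ) (hτ : 0 < τ) :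
    Integrable (fun θ => (θ - c) ^ 2 * postw P τ x θ) ∧ ∫ θ, (θ - c) ^ 2 * postw P τ x θ =
      P.K * ∫ u in Ioi (0:ℝ), wt P x τ u * cm τ x 0 1 c u := by
  have h := postw_moment P hP τ x 0 1 c hτ le_rfl zero_le_one
  simp only [zero_add, one_mul] at h
  exact h

lemma RR_le (P : Prior) (hP : Proper P) (τ c x B : ℝ) (hτ : 0 < τ) (hτ1 : τ ≤ 1)
    (h : ∫ u in Ioi (0:ℝ), wt P x τ u * cm τ x 0 1 c u ≤ B * DD P τ x) : RR P τ c x ≤ B := by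
  have hD := DD_pos P hP τ x hτ hτ1
  have hK := P.K_pos
  rw [RR, (postw_int P hP τ x hτ).2, (postw_int2 P hP τ x c hτ).2, div_le_iff₀ (by positivity)]
  calc _ ≤ P.K * (B * DD P τ x) := by gcongr
    _ = _ := by ring

lemma RR_nonneg (P : Prior) (τ c x : ℝ) : 0 ≤ RR P τ c x := by
  apply div_nonneg
  · exact integral_nonneg fun θ => mul_nonneg (sq_nonneg _) (postw_nonneg P τ x θ)
  · exact integral_nonneg fun θ => postw_nonneg P τ x θ

lemma RR_gen (P : Prior) (hP : Proper P) (ha1 : P.a < 1) : ∃ C : ℝ, 0 < C ∧ ∀ τ c x : ℝ,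
    0 < τ → τ ≤ 1 → P.t₀ * τ ^ 2 ≤ 1 → 1 ≤ Real.log (1 / τ) →
    RR P τ c x ≤ C * Real.log (1 / τ) + 2 * (x - c) ^ 2 := by
  obtain ⟨C, hC, h⟩ := kappa_bound P hP ha1
  refine ⟨2 * C + 1, by positivity, fun τ c x hτ hτ1 ht hΛ => ?_⟩
  have hk := h τ x hτ ht hΛ
  have hD := DD_pos P hP τ x hτ hτ1
  have hki := kapwt_integrable P hP τ x
  have hwi := wt_integrable P hP τ x
  set Λ := Real.log (1 / τ)
  apply RR_le P hP τ c x _ hτ hτ1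
  have hb : IntegrableOn (fun u => (1 + 2 * (x - c) ^ 2) * wt P x τ u) (Ioi 0) := hwi.const_mul _
  have hb2 : IntegrableOn (fun u => (2 * x ^ 2) * (1 / (1 + u * τ ^ 2) * wt P x τ u)) (Ioi 0) :=
    hki.const_mul _
  calc ∫ u in Ioi (0:ℝ), wt P x τ u * cm τ x 0 1 c u
      ≤ ∫ u in Ioi (0:ℝ), ((1 + 2 * (x - c) ^ 2) * wt P x τ u +
        (2 * x ^ 2) * (1 / (1 + u * τ ^ 2) * wt P x τ u)) := by
        apply setIntegral_mono_on (wcm_integrable P hP τ x 0 1 c le_rfl zero_le_one) (hb.add hb2)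
          measurableSet_Ioi
        intro u hu
        have hu0 : 0 < u := hu
        have hw := wt_nonneg P τ x u hu
        obtain ⟨m0, m1⟩ := m_bounds τ u hu
        have hk1 : 1 / (1 + u * τ ^ 2) = 1 - u * τ ^ 2 / (1 + u * τ ^ 2) := by
          have : 1 + u * τ ^ 2 ≠ 0 := by positivity
          field_simp
          ring
        simp only [Pi.add_apply]
        rw [hk1]
        unfold cm
        generalize u * τ ^ 2 / (1 + u * τ ^ 2) = m at *
        have : 0 + 1 * ((m * x - c) ^ 2 + m) ≤ 1 + 2 * (x - c) ^ 2 + 2 * x ^ 2 * (1 - m) := by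
          have e1 : (m * x - c) ^ 2 ≤ 2 * (x - c) ^ 2 + 2 * ((1 - m) ^ 2 * x ^ 2) := by
            nlinarith [sq_nonneg ((x - c) + (1 - m) * x)]
          have e2 : (1 - m) ^ 2 ≤ 1 - m := by nlinarith
          nlinarith [mul_le_mul_of_nonneg_right e2 (sq_nonneg x)]
        calc _ ≤ wt P x τ u * (1 + 2 * (x - c) ^ 2 + 2 * x ^ 2 * (1 - m)) := by gcongr
          _ = _ := by ring
    _ = (1 + 2 * (x - c) ^ 2) * DD P τ x +
        2 * (x ^ 2 * ∫ u in Ioi (0:ℝ), 1 / (1 + u * τ ^ 2) * wt P x τ u) := by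
        rw [integral_add hb hb2, integral_const_mul, integral_const_mul, DD]; ring
    _ ≤ (1 + 2 * (x - c) ^ 2) * DD P τ x + 2 * (C * Λ * DD P τ x) := by gcongr
    _ ≤ _ := by nlinarith

lemma RR_zero (P : Prior) (hP : Proper P) (ha : 1/2 ≤ P.a) (ha1 : P.a < 1) : ∃ C : ℝ, 0 < C ∧
    ∀ τ x : ℝ, 0 < τ → τ ≤ 1 →
    RR P τ 0 x ≤ 1 + x ^ 2 ∧ RR P τ 0 x * Real.exp (-x ^ 2 / 2) ≤ C * (1 + |x|) * τ := by
  obtain ⟨c, hc, hD⟩ := DD_lower0 P hP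
  have hM := P.M_pos
  have ha0 := P.a_pos
  set J := (1 / (1 - P.a) + 1 / P.a) with hJ
  have hJ0 : 0 < J := by
    have q1 : 0 < 1 / (1 - P.a) := by apply one_div_pos.2; linarith
    positivity
  refine ⟨P.M * J / c, by positivity, fun τ x hτ hτ1 => ?_⟩
  have hDx := hD τ x hτ hτ1
  have hD0 := DD_pos P hP τ x hτ hτ1
  have hmi := mwt_integrable P hP τ x
  obtain ⟨hji, hjb⟩ := m_int P ha ha1 τ hτ hτ1
  set N := ∫ u in Ioi (0:ℝ), wt P x τ u * cm τ x 0 1 0 u with hN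
  have hN0 : N ≤ (1 + x ^ 2) * ∫ u in Ioi (0:ℝ), u * τ ^ 2 / (1 + u * τ ^ 2) * wt P x τ u := by
    rw [← integral_const_mul]
    apply setIntegral_mono_on (wcm_integrable P hP τ x 0 1 0 le_rfl zero_le_one)
      (hmi.const_mul _) measurableSet_Ioi
    intro u hu
    have hw := wt_nonneg P τ x u hu
    obtain ⟨m0, m1⟩ := m_bounds τ u hu
    unfold cm
    generalize u * τ ^ 2 / (1 + u * τ ^ 2) = m at *
    have : 0 + 1 * ((m * x - 0) ^ 2 + m) ≤ (1 + x ^ 2) * m := by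
      have e2 : m ^ 2 ≤ m := by nlinarith
      nlinarith [mul_le_mul_of_nonneg_right e2 (sq_nonneg x)]
    calc _ ≤ wt P x τ u * ((1 + x ^ 2) * m) := by gcongr
      _ = _ := by ring
  have hN1 : N ≤ (1 + x ^ 2) * DD P τ x := by
    refine hN0.trans ?_
    gcongr
    apply setIntegral_mono_on hmi (wt_integrable P hP τ x) measurableSet_Ioi
    intro u hu
    exact mul_le_of_le_one_left (wt_nonneg P τ x u hu) (m_bounds τ u hu).2
  have hN2 : N ≤ (1 + |x|) * P.M * (J * τ) := by
    refine hN0.trans ?_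
    calc _ ≤ (1 + |x|) * P.M * ∫ u in Ioi (0:ℝ), u * τ ^ 2 / (1 + u * τ ^ 2) * u ^ (-P.a - 1) := by
          rw [← integral_const_mul, ← integral_const_mul]
          apply setIntegral_mono_on (hmi.const_mul _) (hji.const_mul _) measurableSet_Ioi
          intro u hu
          exact m_pt P τ x u hu
      _ ≤ _ := by gcongr
  refine ⟨RR_le P hP τ 0 x _ hτ hτ1 hN1, ?_⟩
  have hE := Real.exp_pos (-x ^ 2 / 2)
  rw [← le_div_iff₀ hE]
  apply RR_le P hP τ 0 x _ hτ hτ1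
  refine hN2.trans ?_
  have : (1 + |x|) * P.M * (J * τ) = P.M * J / c * (1 + |x|) * τ / Real.exp (-x ^ 2 / 2) *
      (c * Real.exp (-x ^ 2 / 2)) := by field_simp
  rw [this]
  gcongr

lemma Q_gen (P : Prior) (hP : Proper P) (ha1 : P.a < 1) : ∃ C : ℝ, 0 < C ∧ ∀ τ c : ℝ,
    0 < τ → τ ≤ 1 → P.t₀ * τ ^ 2 ≤ 1 → 1 ≤ Real.log (1 / τ) →
    ∃ Q : ℝ → ℝ, Integrable Q ∧ (∀ x, RR P τ c x * gauss (x - c) ≤ Q x) ∧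
      ∫ x, Q x ≤ C * Real.log (1 / τ) := by
  obtain ⟨C, hC, h⟩ := RR_gen P hP ha1
  refine ⟨C + 2, by positivity, fun τ c hτ hτ1 ht hΛ => ?_⟩
  obtain ⟨h1, h2⟩ := gauss_moment (C * Real.log (1 / τ)) 2 c c 1 one_pos
  refine ⟨_, h1, fun x => ?_, ?_⟩
  · have := h τ c x hτ hτ1 ht hΛ
    unfold gauss
    simp only [mul_one]
    gcongr
  · rw [h2]; nlinarith

lemma Q_zero (P : Prior) (hP : Proper P) (ha : 1/2 ≤ P.a) (ha1 : P.a < 1) : ∃ C : ℝ, 0 < C ∧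
    ∀ τ : ℝ, 0 < τ → τ ≤ 1 → 1 ≤ Real.log (1 / τ) →
    ∃ Q : ℝ → ℝ, Integrable Q ∧ (∀ x, RR P τ 0 x * gauss (x - 0) ≤ Q x) ∧
      ∫ x, Q x ≤ C * (τ * Real.log (1 / τ)) := by
  obtain ⟨C, hC, h⟩ := RR_zero P hP ha ha1
  refine ⟨12 * C + 8 * Real.sqrt (Real.pi / (1/8)), by positivity, fun τ hτ hτ1 hΛ => ?_⟩
  set Λ := Real.log (1 / τ) with hΛd
  set b := 2 * Real.sqrt Λ with hb
  have hb0 : 0 ≤ b := by positivity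
  have hb2 : b ^ 2 = 4 * Λ := by
    rw [hb, mul_pow, Real.sq_sqrt (by linarith)]; norm_num
  have hbΛ : b ≤ 2 * Λ := by
    have : Real.sqrt Λ ≤ Λ := by
      rw [Real.sqrt_le_left (by linarith)]; nlinarith
    linarith
  have hτΛ : τ = Real.exp (-Λ) := by
    rw [hΛd, Real.exp_neg, Real.exp_log (by positivity)]; simp
  have hi1 : Integrable ((Icc (-b) b).indicator (fun _ : ℝ => C * (1 + b) * τ)) := by
    rw [integrable_indicator_iff measurableSet_Icc]
    exact integrableOn_const measure_Icc_lt_top.ne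
  have hi2 : Integrable (fun x : ℝ => 8 * τ * Real.exp (-(1/8) * x ^ 2)) :=
    (integrable_exp_neg_mul_sq (by norm_num)).const_mul _
  have hgc : (Real.sqrt (2 * Real.pi))⁻¹ ≤ 1 := by
    apply inv_le_one_of_one_le₀
    apply Real.one_le_sqrt.2
    nlinarith [Real.pi_gt_three]
  refine ⟨fun x => (Icc (-b) b).indicator (fun _ : ℝ => C * (1 + b) * τ) x +
    8 * τ * Real.exp (-(1/8) * x ^ 2), hi1.add hi2, fun x => ?_, ?_⟩
  · obtain ⟨r1, r2⟩ := h τ x hτ hτ1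
    have r0 := RR_nonneg P τ 0 x
    have hR : RR P τ 0 x * gauss (x - 0) ≤ RR P τ 0 x * Real.exp (-x ^ 2 / 2) := by
      unfold gauss
      rw [sub_zero]
      gcongr
      exact mul_le_of_le_one_left (Real.exp_pos _).le hgc
    refine hR.trans ?_
    beta_reduce
    have e0 : 0 ≤ 8 * τ * Real.exp (-(1/8) * x ^ 2) := by positivity
    by_cases hx : x ∈ Icc (-b) b
    · rw [indicator_of_mem hx]
      have hxb : |x| ≤ b := abs_le.2 hx
      have : C * (1 + |x|) * τ ≤ C * (1 + b) * τ := by gcongr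
      linarith
    · rw [indicator_of_notMem hx, zero_add]
      have hxb : b < |x| := by
        by_contra hcon
        push Not at hcon
        exact hx (abs_le.1 hcon)
      have hx2 : 4 * Λ ≤ x ^ 2 := by
        rw [← hb2, ← sq_abs x]; gcongr
      have e1 : Real.exp (-x ^ 2 / 4) ≤ τ := by
        rw [hτΛ]; apply Real.exp_le_exp.2; linarith
      have e2 : (1 + x ^ 2) * Real.exp (-(1/8) * x ^ 2) ≤ 8 := by
        have : -(1/8) * x ^ 2 = -(x ^ 2 / 8) := by ring
        rw [this, Real.exp_neg, ← div_eq_mul_inv, div_le_iff₀ (Real.exp_pos _)]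
        linarith [Real.add_one_le_exp (x ^ 2 / 8), sq_nonneg x]
      have e3 : Real.exp (-x ^ 2 / 2) = Real.exp (-(1/8) * x ^ 2) * Real.exp (-x ^ 2 / 4) *
          Real.exp (-(1/8) * x ^ 2) := by
        rw [← Real.exp_add, ← Real.exp_add]; congr 1; ring
      calc RR P τ 0 x * Real.exp (-x ^ 2 / 2) ≤ (1 + x ^ 2) * Real.exp (-x ^ 2 / 2) := by gcongr
        _ = ((1 + x ^ 2) * Real.exp (-(1/8) * x ^ 2)) * Real.exp (-x ^ 2 / 4) *
          Real.exp (-(1/8) * x ^ 2) := by rw [e3]; ring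
        _ ≤ 8 * τ * Real.exp (-(1/8) * x ^ 2) := by gcongr
  · rw [integral_add hi1 hi2, integral_const_mul, integral_gaussian,
      integral_indicator measurableSet_Icc, setIntegral_const]
    have : volume.real (Icc (-b) b) = 2 * b := by
      simp [Measure.real, hb0]; ring
    rw [this, smul_eq_mul]
    set S := Real.sqrt (Real.pi / (1/8))
    have hS : 0 ≤ S := Real.sqrt_nonneg _
    have h1 : 2 * b * (C * (1 + b) * τ) ≤ 12 * C * (τ * Λ) := by
      have : 2 * b * (1 + b) ≤ 12 * Λ := by nlinarith
      calc _ = (2 * b * (1 + b)) * (C * τ) := by ring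
        _ ≤ 12 * Λ * (C * τ) := by gcongr
        _ = _ := by ring
    have h2 : 8 * τ * S ≤ 8 * S * (τ * Λ) := by
      have : 8 * τ * S * 1 ≤ 8 * τ * S * Λ := by gcongr
      linarith
    linarith

end OneGroup

namespace OneGroup

lemma prod_upd {n : ℕ} (f : Fin n → ℝ → ℝ) (i : Fin n) (g : ℝ → ℝ) (y : Fin n → ℝ) :
    ∏ j, (Function.update f i g) j (y j) = g (y i) * ∏ j ∈ Finset.univ.erase i, f j (y j) := by
  rw [← Finset.mul_prod_erase Finset.univ _ (Finset.mem_univ i), Function.update_self]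
  congr 1
  apply Finset.prod_congr rfl
  intro j hj
  rw [Function.update_of_ne (Finset.ne_of_mem_erase hj)]

lemma upd_int {n : ℕ} (f : Fin n → ℝ → ℝ) (i : Fin n) (g : ℝ → ℝ)
    (hf : ∀ j, Integrable (f j)) (hf1 : ∀ j, ∫ t, f j t = 1) (hg : Integrable g) :
    Integrable (fun y : Fin n → ℝ => g (y i) * ∏ j ∈ Finset.univ.erase i, f j (y j)) ∧
    ∫ y : Fin n → ℝ, g (y i) * ∏ j ∈ Finset.univ.erase i, f j (y j) = ∫ t, g t := by
  simp_rw [← prod_upd]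
  constructor
  · apply Integrable.fintype_prod (μ := fun _ => volume)
    intro j
    by_cases h : j = i
    · subst h; simpa using hg
    · rw [Function.update_of_ne h]; exact hf j
  · rw [integral_fintype_prod_volume_eq_prod,
      ← Finset.mul_prod_erase Finset.univ _ (Finset.mem_univ i), Function.update_self]
    rw [Finset.prod_eq_one, mul_one]
    intro j hj
    rw [Function.update_of_ne (Finset.ne_of_mem_erase hj)]
    exact hf1 j

lemma gauss_nonneg (z : ℝ) : 0 ≤ gauss z := by unfold gauss; positivity

lemma gauss_int (c : ℝ) : Integrable (fun x => gauss (x - c)) ∧ ∫ x, gauss (x - c) = 1 := by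
  have h := gauss_moment 1 0 c c 1 one_pos
  simp only [zero_mul, add_zero, one_mul, mul_one] at h
  exact h

lemma postProb_le (P : Prior) (hP : Proper P) (τ : ℝ) (hτ : 0 < τ) (hτ1 : τ ≤ 1) {n : ℕ}
    (c x : Fin n → ℝ) (r : ℝ) (hr : 0 < r) :
    postProb P τ x {θ : Fin n → ℝ | r < ∑ i, (θ i - c i) ^ 2} ≤
      (1 / r) * ∑ i, RR P τ (c i) (x i) := by
  set A := {θ : Fin n → ℝ | r < ∑ i, (θ i - c i) ^ 2} with hA
  have hAm : MeasurableSet A := by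
    apply measurableSet_lt <;> fun_prop
  set Z : Fin n → ℝ := fun j => ∫ t, postw P τ (x j) t with hZ
  have hZ0 : ∀ j, 0 < Z j := fun j => by
    simp only [hZ]
    rw [(postw_int P hP τ (x j) hτ).2]
    exact mul_pos P.K_pos (DD_pos P hP τ (x j) hτ hτ1)
  set f : Fin n → ℝ → ℝ := fun j t => postw P τ (x j) t / Z j with hf
  have hfi : ∀ j, Integrable (f j) := fun j => (postw_int P hP τ (x j) hτ).1.div_const _
  have hf1 : ∀ j, ∫ t, f j t = 1 := fun j => by
    simp only [hf]
    rw [integral_div]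
    exact div_self (hZ0 j).ne'
  have hf0 : ∀ j t, 0 ≤ f j t := fun j t => div_nonneg (postw_nonneg _ _ _ _) (hZ0 j).le
  have hpp : postProb P τ x A = ∫ θ in A, ∏ j, f j (θ j) := by
    unfold postProb
    rw [integral_fintype_prod_volume_eq_prod (fun j => postw P τ (x j)), ← integral_div]
    congr 1
    funext θ
    simp only [hf]
    rw [Finset.prod_div_distrib]
  have hWi : Integrable (fun θ : Fin n → ℝ => ∏ j, f j (θ j)) :=
    Integrable.fintype_prod (μ := fun _ => volume) hfi
  have hgi : ∀ i, Integrable (fun t => (t - c i) ^ 2 * f i t) := fun i => by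
    have := (postw_int2 P hP τ (x i) (c i) hτ).1.div_const (Z i)
    refine this.congr (ae_of_all _ fun t => ?_)
    simp only [hf]; ring
  have hgv : ∀ i, ∫ t, (t - c i) ^ 2 * f i t = RR P τ (c i) (x i) := fun i => by
    rw [RR, ← integral_div]
    congr 1
    funext t
    simp only [hf, hZ]; ring
  have hu := fun i => upd_int f i _ hfi hf1 (hgi i)
  have hpe : ∀ i (θ : Fin n → ℝ), (θ i - c i) ^ 2 * f i (θ i) *
      ∏ j ∈ Finset.univ.erase i, f j (θ j) = (θ i - c i) ^ 2 * ∏ j, f j (θ j) := by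
    intro i θ
    rw [← Finset.mul_prod_erase Finset.univ (fun j => f j (θ j)) (Finset.mem_univ i)]
    ring
  have hS : Integrable (fun θ : Fin n → ℝ => (1 / r) * ∑ i, (θ i - c i) ^ 2 * f i (θ i) *
      ∏ j ∈ Finset.univ.erase i, f j (θ j)) :=
    (integrable_finsetSum _ fun i _ => (hu i).1).const_mul _
  have hval : ∫ θ : Fin n → ℝ, (1 / r) * ∑ i, (θ i - c i) ^ 2 * f i (θ i) *
      ∏ j ∈ Finset.univ.erase i, f j (θ j) = (1 / r) * ∑ i, RR P τ (c i) (x i) := by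
    rw [integral_const_mul, integral_finsetSum _ fun i _ => (hu i).1]
    congr 1
    apply Finset.sum_congr rfl
    intro i _
    rw [(hu i).2, hgv]
  rw [hpp, ← hval]
  have hW0 : ∀ θ : Fin n → ℝ, 0 ≤ ∏ j, f j (θ j) := fun θ =>
    Finset.prod_nonneg fun j _ => hf0 j _
  refine le_trans (setIntegral_mono_on hWi.integrableOn hS.integrableOn hAm ?_)
    (setIntegral_le_integral hS ?_)
  · intro θ hθ
    have hθ' : r < ∑ i, (θ i - c i) ^ 2 := hθ
    simp_rw [hpe]
    rw [← Finset.sum_mul, ← mul_assoc]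
    apply le_mul_of_one_le_left (hW0 θ)
    rw [one_div, ← div_eq_inv_mul, le_div_iff₀ hr]; linarith
  · refine ae_of_all _ fun θ => ?_
    simp_rw [hpe]
    rw [← Finset.sum_mul]
    have := hW0 θ
    have h2 : 0 ≤ ∑ i, (θ i - c i) ^ 2 := Finset.sum_nonneg fun i _ => sq_nonneg _
    simp only [Pi.zero_apply]
    positivity

lemma postProb_nonneg (P : Prior) (τ : ℝ) {n : ℕ} (x : Fin n → ℝ) (A : Set (Fin n → ℝ)) :
    0 ≤ postProb P τ x A := by
  unfold postProb
  apply div_nonneg <;>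
  exact integral_nonneg fun θ => Finset.prod_nonneg fun j _ => postw_nonneg _ _ _ _

lemma EN_le (P : Prior) (hP : Proper P) (τ : ℝ) (hτ : 0 < τ) (hτ1 : τ ≤ 1) {n : ℕ}
    (c : Fin n → ℝ) (r : ℝ) (hr : 0 < r) (Q : Fin n → ℝ → ℝ) (hQ : ∀ i, Integrable (Q i))
    (hRQ : ∀ i x, RR P τ (c i) x * gauss (x - c i) ≤ Q i x) :
    EN n c (fun x => postProb P τ x {θ : Fin n → ℝ | r < ∑ i, (θ i - c i) ^ 2}) ≤
      (1 / r) * ∑ i, ∫ t, Q i t := by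
  set f : Fin n → ℝ → ℝ := fun j t => gauss (t - c j) with hf
  have hfi : ∀ j, Integrable (f j) := fun j => (gauss_int (c j)).1
  have hf1 : ∀ j, ∫ t, f j t = 1 := fun j => (gauss_int (c j)).2
  have hf0 : ∀ j t, 0 ≤ f j t := fun j t => gauss_nonneg _
  have hu := fun i => upd_int f i _ hfi hf1 (hQ i)
  have hval : ∫ y : Fin n → ℝ, (1 / r) * ∑ i, Q i (y i) *
      ∏ j ∈ Finset.univ.erase i, f j (y j) = (1 / r) * ∑ i, ∫ t, Q i t := by
    rw [integral_const_mul, integral_finsetSum _ fun i _ => (hu i).1]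
    congr 1
    apply Finset.sum_congr rfl
    intro i _
    rw [(hu i).2]
  rw [← hval]
  unfold EN
  apply integral_mono_of_nonneg
  · refine ae_of_all _ fun y => ?_
    exact mul_nonneg (postProb_nonneg _ _ _ _) (Finset.prod_nonneg fun j _ => gauss_nonneg _)
  · exact (integrable_finsetSum _ fun i _ => (hu i).1).const_mul _
  · refine ae_of_all _ fun y => ?_
    have h1 := postProb_le P hP τ hτ hτ1 c y r hr
    have hp0 : 0 ≤ ∏ j, f j (y j) := Finset.prod_nonneg fun j _ => hf0 j _
    beta_reduce
    calc _ ≤ ((1 / r) * ∑ i, RR P τ (c i) (y i)) * ∏ j, f j (y j) := by gcongr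
      _ = (1 / r) * ∑ i, (RR P τ (c i) (y i) * gauss (y i - c i)) *
          ∏ j ∈ Finset.univ.erase i, f j (y j) := by
        rw [mul_assoc, Finset.sum_mul]
        congr 1
        apply Finset.sum_congr rfl
        intro i _
        rw [← Finset.mul_prod_erase Finset.univ (fun j => f j (y j)) (Finset.mem_univ i)]
        ring
      _ ≤ _ := by
        gcongr with i _
        · exact Finset.prod_nonneg fun j _ => hf0 j _
        · exact hRQ i (y i)

end OneGroup

namespace OneGroup

lemma EN_improper (P : Prior) (hP : ¬ Proper P) (τ : ℝ) (hτ : 0 < τ) {n : ℕ} (hn : 0 < n)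
    (c : Fin n → ℝ) (A : Set (Fin n → ℝ)) : EN n c (fun x => postProb P τ x A) = 0 := by
  have h : ∀ x : Fin n → ℝ, postProb P τ x A = 0 := by
    intro x
    unfold postProb
    have : ∫ θ : Fin n → ℝ, ∏ i, postw P τ (x i) (θ i) = 0 := by
      rw [integral_fintype_prod_volume_eq_prod (fun j => postw P τ (x j))]
      exact Finset.prod_eq_zero (Finset.mem_univ (⟨0, hn⟩ : Fin n)) (improper_zero P hP τ _ hτ)
    rw [this, div_zero]
  unfold EN
  simp [h]

lemma final_bound (P : Prior) (hP : Proper P) (C1 C2 : ℝ) (hC1 : 0 < C1) (hC2 : 0 < C2)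
    (τ ℓ' : ℝ) (hτ : 0 < τ) (hτ1 : τ ≤ 1) (hl : 0 ≤ ℓ')
    (h1 : ∀ c, ∃ Q : ℝ → ℝ, Integrable Q ∧ (∀ x, RR P τ c x * gauss (x - c) ≤ Q x) ∧
      ∫ x, Q x ≤ C1 * ℓ')
    (h2 : ∃ Q : ℝ → ℝ, Integrable Q ∧ (∀ x, RR P τ 0 x * gauss (x - 0) ≤ Q x) ∧
      ∫ x, Q x ≤ C2 * (τ * ℓ'))
    {n p : ℕ} (θ₀ : Fin n → ℝ) (hθ : θ₀ ∈ nearlyBlack n p) (hnp : (n : ℝ) * τ ≤ p)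
    (r : ℝ) (hr : 0 < r) :
    EN n θ₀ (fun x => postProb P τ x {θ : Fin n → ℝ | r < ∑ i, (θ i - θ₀ i) ^ 2}) ≤
      (1 / r) * ((C1 + C2) * (p * ℓ')) := by
  have hex : ∀ i, ∃ Q : ℝ → ℝ, Integrable Q ∧
      (∀ x, RR P τ (θ₀ i) x * gauss (x - θ₀ i) ≤ Q x) ∧
      ∫ x, Q x ≤ (if θ₀ i ≠ 0 then C1 * ℓ' else 0) + C2 * (τ * ℓ') := by
    intro i
    by_cases h0 : θ₀ i = 0
    · rw [h0]; simpa using h2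
    · obtain ⟨Q, a, b, d⟩ := h1 (θ₀ i)
      refine ⟨Q, a, b, ?_⟩
      rw [if_pos h0]
      have : 0 ≤ C2 * (τ * ℓ') := by positivity
      linarith
  choose Q hQ hRQ hI using hex
  refine (EN_le P hP τ hτ hτ1 θ₀ r hr Q hQ hRQ).trans ?_
  refine mul_le_mul_of_nonneg_left ?_ (by positivity)
  refine (Finset.sum_le_sum fun i _ => hI i).trans ?_
  rw [Finset.sum_add_distrib, ← Finset.sum_filter, Finset.sum_const, Finset.sum_const,
    nsmul_eq_mul, nsmul_eq_mul, Finset.card_univ, Fintype.card_fin]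
  have hc : ((Finset.univ.filter fun i => θ₀ i ≠ 0).card : ℝ) ≤ p := by exact_mod_cast hθ
  have e1 := mul_le_mul_of_nonneg_right hc (by positivity : 0 ≤ C1 * ℓ')
  have e2 := mul_le_mul_of_nonneg_right hnp (by positivity : 0 ≤ C2 * ℓ')
  linarith

end OneGroup

end Helpers


/-- Theorem 3.3: with `τ_n = (p_n/n)^α`, `α ≥ 1`, the posterior
distribution contracts around the true mean vector at the minimax rate. -/
theorem posterior_contraction_around_truth (P : Prior) (ha : 1/2 ≤ P.a) (ha' : P.a < 1)
    (p : ℕ → ℕ)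
    (hp : Tendsto p atTop atTop)
    (hpo : (fun n => (p n : ℝ)) =o[atTop] (fun n => (n : ℝ)))
    (α : ℝ) (hα : 1 ≤ α)
    (Mseq : ℕ → ℝ) (hM : Tendsto Mseq atTop atTop) :
    ∀ ε > (0:ℝ), ∃ N : ℕ, ∀ n ≥ N, ∀ θ₀ ∈ nearlyBlack n (p n),
      EN n θ₀ (fun x => postProb P (((p n : ℝ) / (n : ℝ)) ^ α) x
        {θ : Fin n → ℝ |
          Mseq n * (p n : ℝ) * Real.log ((n : ℝ) / (p n : ℝ)) <
            ∑ i, (θ i - θ₀ i) ^ 2}) < ε := by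
  intro ε hε
  have hp1 : ∀ᶠ n in atTop, 1 ≤ p n := hp.eventually_ge_atTop 1
  have hδ : Tendsto (fun n : ℕ => (p n : ℝ) / (n : ℝ)) atTop (nhds 0) :=
    hpo.tendsto_div_nhds_zero
  by_cases hP : Proper P
  · obtain ⟨C1, hC1, H1⟩ := Q_gen P hP ha'
    obtain ⟨C2, hC2, H2⟩ := Q_zero P hP ha ha'
    have ht := P.t₀_pos
    have hd1 := hδ.eventually_le_const (Real.exp_pos (-1))
    have hd2 := hδ.eventually_le_const (show (0:ℝ) < 1 / (P.t₀ + 1) by positivity)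
    have hM1 := hM.eventually_gt_atTop ((C1 + C2) * α / ε)
    obtain ⟨N, hN⟩ := Filter.eventually_atTop.1
      (hp1.and ((eventually_ge_atTop 1).and (hd1.and (hd2.and hM1))))
    refine ⟨N, fun n hn θ₀ hθ => ?_⟩
    obtain ⟨hpn, hn1, hd1, hd2, hM1⟩ := hN n hn
    have hp0 : (0:ℝ) < p n := by exact_mod_cast hpn
    have hn0 : (0:ℝ) < n := by exact_mod_cast hn1
    have hα0 : 0 < α := by linarith
    set δ : ℝ := (p n : ℝ) / (n : ℝ) with hδdef
    have hδ0 : 0 < δ := by positivity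
    have hδ1 : δ ≤ 1 := hd1.trans (Real.exp_le_one_iff.2 (by norm_num))
    have hτ0 : 0 < δ ^ α := Real.rpow_pos_of_pos hδ0 α
    have hτδ : δ ^ α ≤ δ := by
      have := Real.rpow_le_rpow_of_exponent_ge hδ0 hδ1 hα
      rwa [Real.rpow_one] at this
    have hτ1 : δ ^ α ≤ 1 := hτδ.trans hδ1
    have hlog : Real.log ((n : ℝ) / (p n : ℝ)) = - Real.log δ := by
      rw [hδdef, ← Real.log_inv, inv_div]
    have hlogτ : Real.log (1 / δ ^ α) = α * Real.log ((n : ℝ) / (p n : ℝ)) := by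
      rw [hlog, one_div, Real.log_inv, Real.log_rpow hδ0]; ring
    have hl1 : 1 ≤ Real.log ((n : ℝ) / (p n : ℝ)) := by
      rw [hlog]
      have := (Real.log_le_iff_le_exp hδ0).2 hd1
      linarith
    set l : ℝ := Real.log ((n : ℝ) / (p n : ℝ)) with hl
    have hlτ : 1 ≤ Real.log (1 / δ ^ α) := by
      rw [hlogτ]; nlinarith
    have ht0 : P.t₀ * (δ ^ α) ^ 2 ≤ 1 := by
      have e1 : (δ ^ α) ^ 2 ≤ δ := by nlinarith
      have e2 : P.t₀ * δ ≤ 1 := by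
        rw [le_div_iff₀ (by positivity)] at hd2
        nlinarith
      nlinarith
    have hMpos : 0 < Mseq n := lt_of_le_of_lt (by positivity) hM1
    have hr : 0 < Mseq n * (p n : ℝ) * l := by positivity
    have hnp : (n : ℝ) * δ ^ α ≤ p n := by
      have : (n : ℝ) * δ = p n := by rw [hδdef]; field_simp
      nlinarith
    have hb := final_bound P hP C1 C2 hC1 hC2 (δ ^ α) (Real.log (1 / δ ^ α)) hτ0 hτ1
      (by linarith) (fun c => H1 _ c hτ0 hτ1 ht0 hlτ) (H2 _ hτ0 hτ1 hlτ) θ₀ hθ hnp _ hr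
    refine hb.trans_lt ?_
    rw [hlogτ]
    have : 1 / (Mseq n * (p n : ℝ) * l) * ((C1 + C2) * ((p n : ℝ) * (α * l))) =
        (C1 + C2) * α / Mseq n := by
      have : l ≠ 0 := by linarith
      field_simp
    rw [this, div_lt_iff₀ hMpos]
    rw [div_lt_iff₀ hε] at hM1
    linarith
  · obtain ⟨N, hN⟩ := Filter.eventually_atTop.1 (hp1.and (eventually_ge_atTop 1))
    refine ⟨N, fun n hn θ₀ _ => ?_⟩
    obtain ⟨hpn, hn1⟩ := hN n hn
    have hp0 : (0:ℝ) < p n := by exact_mod_cast hpn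
    have hn0 : (0:ℝ) < n := by exact_mod_cast hn1
    rw [EN_improper P hP _ (Real.rpow_pos_of_pos (by positivity) α) hn1]
    exact hε
end
end

section
/- Let L : (0,∞) → (0,∞) be measurable, non-decreasing, slowly varying, bounded above by M ∈ (0,∞), with ∫₀^∞ t^{-3/2} L(t) dt = 1/K for some K > 0. For y > 0, τ > 0 and k > 0 set I_k = ∫₀^∞ (tτ²)^{k−1/2} (1+tτ²)^{-k} t^{-3/2} L(t) e^{tτ²y/(1+tτ²)} dt. Then for every y > 0 and every 0 < τ < 1/2, I_{1/2} ≤ τ [ e^{τ²y}/(Kτ) + 2M e^{τy}(1/τ − 1/√τ) + 2M e^{y/2}(1/√τ − √2) + (2M√2/y)(e^{y} − e^{y/2}) ]. -/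
open MeasureTheory Filter Set

noncomputable section

open OneGroup

lemma aux_h (τ t : ℝ) (ht : 0 < t) :
    (1 + t * τ ^ 2) ^ (-((1:ℝ)/2)) * t ^ (-(3:ℝ)/2) = (t ^ 2)⁻¹ / Real.sqrt (t⁻¹ + τ ^ 2) := by
  have hs : 1 + t * τ ^ 2 = t * (t⁻¹ + τ ^ 2) := by field_simp
  have h0 : 0 < t⁻¹ + τ ^ 2 := by positivity
  rw [hs, Real.mul_rpow ht.le h0.le, Real.rpow_neg h0.le, ← Real.sqrt_eq_rpow]
  have : t ^ (-((1:ℝ)/2)) * t ^ (-(3:ℝ)/2) = (t ^ 2)⁻¹ := by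
    rw [← Real.rpow_add ht]
    norm_num
  rw [← this]
  ring

lemma aux_F (L : ℝ → ℝ) (y τ t : ℝ) (ht : 0 < t) (hτ : 0 < τ) :
    (t * τ ^ 2) ^ ((1:ℝ)/2 - 1/2) * (1 + t * τ ^ 2) ^ (-((1:ℝ)/2)) *
        t ^ (-(3:ℝ)/2) * L t * Real.exp (t * τ ^ 2 * y / (1 + t * τ ^ 2))
      = (t ^ 2)⁻¹ / Real.sqrt (t⁻¹ + τ ^ 2) * L t * Real.exp (y * τ ^ 2 / (t⁻¹ + τ ^ 2)) := by
  rw [← aux_h τ t ht]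
  have : t * τ ^ 2 * y / (1 + t * τ ^ 2) = y * τ ^ 2 / (t⁻¹ + τ ^ 2) := by
    field_simp
  rw [this]
  simp

lemma aux_mid (L : ℝ → ℝ) (M y τ p q : ℝ) (hM : 0 < M)
    (hLle : ∀ t : ℝ, 0 < t → L t ≤ M) (hLpos : ∀ t : ℝ, 0 < t → 0 < L t)
    (hy : 0 < y) (hp : 0 < p) (hpq : p ≤ q)
    (hint : IntervalIntegrable (fun t => (t ^ 2)⁻¹ / Real.sqrt (t⁻¹ + τ ^ 2) * L t *
      Real.exp (y * τ ^ 2 / (t⁻¹ + τ ^ 2))) volume p q) :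
    (∫ t in p..q, (t ^ 2)⁻¹ / Real.sqrt (t⁻¹ + τ ^ 2) * L t *
      Real.exp (y * τ ^ 2 / (t⁻¹ + τ ^ 2))) ≤
      2 * M * Real.exp (y * τ ^ 2 / (q⁻¹ + τ ^ 2)) *
        (Real.sqrt (p⁻¹ + τ ^ 2) - Real.sqrt (q⁻¹ + τ ^ 2)) := by
  have hpos : ∀ t ∈ Icc p q, 0 < t := fun t ht => hp.trans_le ht.1
  have hc : ContinuousOn (fun t : ℝ => (t ^ 2)⁻¹ / Real.sqrt (t⁻¹ + τ ^ 2)) (uIcc p q) := by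
    rw [uIcc_of_le hpq]
    have h1 : ContinuousOn (fun t : ℝ => t⁻¹) (Icc p q) :=
      continuousOn_inv₀.mono fun t ht => (hpos t ht).ne'
    have h2 : ContinuousOn (fun t : ℝ => (t ^ 2)⁻¹) (Icc p q) :=
      (h1.pow 2).congr fun t _ => by simp
    refine h2.div (h1.add continuousOn_const).sqrt fun t ht => ?_
    have := hpos t ht
    positivity
  have hF : (∫ t in p..q, (t ^ 2)⁻¹ / Real.sqrt (t⁻¹ + τ ^ 2)) =
      (-2 * Real.sqrt (q⁻¹ + τ ^ 2)) - (-2 * Real.sqrt (p⁻¹ + τ ^ 2)) := by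
    refine intervalIntegral.integral_eq_sub_of_hasDerivAt
      (f := fun t => -2 * Real.sqrt (t⁻¹ + τ ^ 2)) (fun t ht => ?_) hc.intervalIntegrable
    rw [uIcc_of_le hpq] at ht
    have h0 := hpos t ht
    have h1 : 0 < t⁻¹ + τ ^ 2 := by positivity
    have := ((((hasDerivAt_inv h0.ne').add_const (τ ^ 2)).sqrt h1.ne').const_mul (-2))
    refine this.congr_deriv ?_
    ring
  have hle : (∫ t in p..q, (t ^ 2)⁻¹ / Real.sqrt (t⁻¹ + τ ^ 2) * L t *
      Real.exp (y * τ ^ 2 / (t⁻¹ + τ ^ 2))) ≤ ∫ t in p..q, (t ^ 2)⁻¹ / Real.sqrt (t⁻¹ + τ ^ 2) *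
        (M * Real.exp (y * τ ^ 2 / (q⁻¹ + τ ^ 2))) := by
    refine intervalIntegral.integral_mono_on hpq hint
      (hc.intervalIntegrable.mul_const _) fun t ht => ?_
    have h0 := hpos t ht
    have hq := h0.trans_le ht.2
    have h1 := hLle t h0
    have h2 : q⁻¹ ≤ t⁻¹ := by gcongr; exact ht.2
    rw [mul_assoc]
    gcongr
  rw [intervalIntegral.integral_mul_const, hF] at hle
  refine hle.trans (le_of_eq ?_)
  ring

lemma aux_tail (L : ℝ → ℝ) (M y τ c : ℝ) (hM : 0 < M) (hτ : 0 < τ)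
    (hLle : ∀ t : ℝ, 0 < t → L t ≤ M) (hLpos : ∀ t : ℝ, 0 < t → 0 < L t)
    (hy : 0 < y) (hc : 0 < c) (hcτ : c⁻¹ = τ ^ 2)
    (hint : IntegrableOn (fun t => (t ^ 2)⁻¹ / Real.sqrt (t⁻¹ + τ ^ 2) * L t *
      Real.exp (y * τ ^ 2 / (t⁻¹ + τ ^ 2))) (Ioi c)) :
    (∫ t in Ioi c, (t ^ 2)⁻¹ / Real.sqrt (t⁻¹ + τ ^ 2) * L t *
      Real.exp (y * τ ^ 2 / (t⁻¹ + τ ^ 2))) ≤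
      τ * (2 * M * Real.sqrt 2 / y * (Real.exp y - Real.exp (y / 2))) := by
  set C := τ * (2 * M * Real.sqrt 2 / y) with hC
  have hC0 : 0 < C := by positivity
  have hd : ∀ t ∈ Ici c, HasDerivAt (fun t => C * Real.exp (y * τ ^ 2 / (t⁻¹ + τ ^ 2)))
      (C * (Real.exp (y * τ ^ 2 / (t⁻¹ + τ ^ 2)) *
        (y * τ ^ 2 * (t ^ 2)⁻¹ / (t⁻¹ + τ ^ 2) ^ 2))) t := by
    intro t ht
    have h0 : 0 < t := hc.trans_le ht
    have h1 : 0 < t⁻¹ + τ ^ 2 := by positivity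
    have := ((((hasDerivAt_const t (y * τ ^ 2)).div
      ((hasDerivAt_inv h0.ne').add_const (τ ^ 2)) h1.ne').exp).const_mul C)
    refine this.congr_deriv ?_
    simp
  have hnn : ∀ t ∈ Ioi c, 0 ≤ (C * (Real.exp (y * τ ^ 2 / (t⁻¹ + τ ^ 2)) *
        (y * τ ^ 2 * (t ^ 2)⁻¹ / (t⁻¹ + τ ^ 2) ^ 2))) := by
    intro t ht
    have h0 : 0 < t := hc.trans ht
    positivity
  have hlim : Tendsto (fun t : ℝ => C * Real.exp (y * τ ^ 2 / (t⁻¹ + τ ^ 2))) atTop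
      (nhds (C * Real.exp y)) := by
    have h1 : Tendsto (fun t : ℝ => t⁻¹ + τ ^ 2) atTop (nhds (0 + τ ^ 2)) :=
      tendsto_inv_atTop_zero.add_const _
    have h2 := (Real.continuous_exp.tendsto _).comp
      ((tendsto_const_nhds (x := y * τ ^ 2)).div h1 (by positivity))
    have h3 := h2.const_mul C
    have e : y * τ ^ 2 / (0 + τ ^ 2) = y := by field_simp; simp
    rw [e] at h3
    exact h3
  have hI := integrableOn_Ioi_deriv_of_nonneg' hd hnn hlim
  have hE := integral_Ioi_of_hasDerivAt_of_nonneg' hd hnn hlim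
  have hle := setIntegral_mono_on hint hI measurableSet_Ioi (fun t ht => ?_)
  · rw [hE] at hle
    refine hle.trans (le_of_eq ?_)
    have : y * τ ^ 2 / (c⁻¹ + τ ^ 2) = y / 2 := by rw [hcτ]; field_simp; norm_num
    rw [this, hC]; ring
  · have h0 : 0 < t := hc.trans ht
    have h1 : t⁻¹ ≤ τ ^ 2 := by rw [← hcτ]; gcongr; exact le_of_lt ht
    set s := t⁻¹ + τ ^ 2 with hs
    have hs0 : 0 < s := by positivity
    have hs2 : s ≤ 2 * τ ^ 2 := by linarith
    have hr : Real.sqrt s ≤ Real.sqrt 2 * τ := by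
      refine (Real.sqrt_le_sqrt hs2).trans (le_of_eq ?_)
      rw [Real.sqrt_mul (by norm_num), Real.sqrt_sq hτ.le]
    have hr0 : 0 < Real.sqrt s := Real.sqrt_pos.2 hs0
    have key : 1 / Real.sqrt s ≤ 2 * Real.sqrt 2 * τ ^ 3 / s ^ 2 := by
      rw [div_le_div_iff₀ hr0 (by positivity)]
      have e : Real.sqrt s * Real.sqrt s = s := Real.mul_self_sqrt hs0.le
      calc 1 * s ^ 2 = s * Real.sqrt s * Real.sqrt s := by rw [mul_assoc, e]; ring
        _ ≤ (2 * τ ^ 2) * (Real.sqrt 2 * τ) * Real.sqrt s := by gcongr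
        _ = _ := by ring
    have hL := hLle t h0
    have hLp := hLpos t h0
    calc (t ^ 2)⁻¹ / Real.sqrt s * L t * Real.exp (y * τ ^ 2 / s)
        = (t ^ 2)⁻¹ * (1 / Real.sqrt s) * L t * Real.exp (y * τ ^ 2 / s) := by ring
      _ ≤ (t ^ 2)⁻¹ * (2 * Real.sqrt 2 * τ ^ 3 / s ^ 2) * M * Real.exp (y * τ ^ 2 / s) := by
          gcongr
      _ = _ := by rw [hC]; field_simp

/-- part of Lemma A.6: bound on the integral
`I_{1/2} = ∫₀^∞ (tτ²)^{1/2 - 1/2} (1+tτ²)^{-(1/2)} t^{-3/2} L(t) e^{tτ²y/(1+tτ²)} dt`. -/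
theorem I_one_half_upper_bound (L : ℝ → ℝ) (M K : ℝ) (hM : 0 < M) (hK : 0 < K)
    (hLpos : ∀ t : ℝ, 0 < t → 0 < L t)
    (hLmeas : Measurable L)
    (hLmono : ∀ s t : ℝ, 0 < s → s ≤ t → L s ≤ L t)
    (hLslow : ∀ c : ℝ, 0 < c → Tendsto (fun t => L (c * t) / L t) atTop (nhds 1))
    (hLle : ∀ t : ℝ, 0 < t → L t ≤ M)
    (hLint : (∫ t in Ioi (0:ℝ), t ^ (-(3:ℝ)/2) * L t) = 1 / K)
    (y τ : ℝ) (hy : 0 < y) (hτ : 0 < τ) (hτ' : τ < 1 / 2) :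
    (∫ t in Ioi (0:ℝ), (t * τ ^ 2) ^ ((1:ℝ)/2 - 1/2) * (1 + t * τ ^ 2) ^ (-((1:ℝ)/2)) *
        t ^ (-(3:ℝ)/2) * L t * Real.exp (t * τ ^ 2 * y / (1 + t * τ ^ 2))) ≤
      τ * (Real.exp (τ ^ 2 * y) / (K * τ) +
        2 * M * Real.exp (τ * y) * (1 / τ - 1 / Real.sqrt τ) +
        2 * M * Real.exp (y / 2) * (1 / Real.sqrt τ - Real.sqrt 2) +
        2 * M * Real.sqrt 2 / y * (Real.exp y - Real.exp (y / 2))) := by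
  have hsp : ∀ t : ℝ, 0 < t → 0 < t⁻¹ + τ ^ 2 := fun t ht => by positivity
  rw [setIntegral_congr_fun measurableSet_Ioi (fun t ht => aux_F L y τ t ht hτ)]
  have hI0 : IntegrableOn (fun t : ℝ => t ^ (-(3:ℝ)/2) * L t) (Ioi 0) := by
    by_contra h
    rw [integral_undef h] at hLint
    have : 0 < 1 / K := by positivity
    linarith
  have hb : ∀ t : ℝ, 0 < t → (t ^ 2)⁻¹ / Real.sqrt (t⁻¹ + τ ^ 2) ≤ t ^ (-(3:ℝ)/2) := by
    intro t ht
    rw [← aux_h τ t ht]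
    have h1 : (1 + t * τ ^ 2) ^ (-((1:ℝ)/2)) ≤ 1 :=
      Real.rpow_le_one_of_one_le_of_nonpos (by nlinarith [mul_pos ht (pow_pos hτ 2)]) (by norm_num)
    have h2 : 0 ≤ t ^ (-(3:ℝ)/2) := by positivity
    nlinarith
  set F : ℝ → ℝ := fun t => (t ^ 2)⁻¹ / Real.sqrt (t⁻¹ + τ ^ 2) * L t *
      Real.exp (y * τ ^ 2 / (t⁻¹ + τ ^ 2)) with hF
  have hFm : Measurable F := by fun_prop
  have hIF : IntegrableOn F (Ioi 0) := by
    refine Integrable.mono' (hI0.mul_const (Real.exp y)) hFm.aestronglyMeasurable ?_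
    refine (ae_restrict_iff' measurableSet_Ioi).2 (Eventually.of_forall fun t ht => ?_)
    have h0 : 0 < t := ht
    have hL := hLpos t h0
    have hs := hsp t h0
    have h3 : y * τ ^ 2 / (t⁻¹ + τ ^ 2) ≤ y := by
      rw [div_le_iff₀ hs]
      have : 0 < y * t⁻¹ := by positivity
      nlinarith
    rw [Real.norm_of_nonneg (by simp only [hF]; positivity)]
    simp only [hF]
    have := hb t h0
    gcongr
  obtain ⟨a, ha⟩ : ∃ a : ℝ, a = (1 - τ ^ 2)⁻¹ := ⟨_, rfl⟩
  obtain ⟨b, hb'⟩ : ∃ b : ℝ, b = (τ - τ ^ 2)⁻¹ := ⟨_, rfl⟩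
  obtain ⟨c, hc⟩ : ∃ c : ℝ, c = (τ ^ 2)⁻¹ := ⟨_, rfl⟩
  have e1 : 0 < τ ^ 2 := by positivity
  have e2 : 0 < τ - τ ^ 2 := by nlinarith
  have e3 : 0 < 1 - τ ^ 2 := by nlinarith
  have ha0 : 0 < a := by rw [ha]; positivity
  have hb0 : 0 < b := by rw [hb']; positivity
  have hc0 : 0 < c := by rw [hc]; positivity
  have hab : a ≤ b := by rw [ha, hb']; gcongr; linarith
  have hbc : b ≤ c := by rw [hb', hc]; gcongr; nlinarith
  have ha' : a⁻¹ = 1 - τ ^ 2 := by rw [ha, inv_inv]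
  have hb'' : b⁻¹ = τ - τ ^ 2 := by rw [hb', inv_inv]
  have hc' : c⁻¹ = τ ^ 2 := by rw [hc, inv_inv]
  have i1 : IntervalIntegrable F volume 0 a :=
    (intervalIntegrable_iff_integrableOn_Ioc_of_le ha0.le).2 (hIF.mono_set Ioc_subset_Ioi_self)
  have i2 : IntervalIntegrable F volume a b :=
    (intervalIntegrable_iff_integrableOn_Ioc_of_le hab).2
      (hIF.mono_set (Ioc_subset_Ioi_self.trans (Ioi_subset_Ioi ha0.le)))
  have i3 : IntervalIntegrable F volume b c :=
    (intervalIntegrable_iff_integrableOn_Ioc_of_le hbc).2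
      (hIF.mono_set (Ioc_subset_Ioi_self.trans (Ioi_subset_Ioi hb0.le)))
  have i4 : IntegrableOn F (Ioi c) := hIF.mono_set (Ioi_subset_Ioi hc0.le)
  have hsplit : ∫ t in Ioi 0, F t = (∫ t in (0:ℝ)..a, F t) + (∫ t in a..b, F t) +
      (∫ t in b..c, F t) + ∫ t in Ioi c, F t := by
    rw [intervalIntegral.integral_add_adjacent_intervals i1 i2,
      intervalIntegral.integral_add_adjacent_intervals (i1.trans i2) i3,
      intervalIntegral.integral_of_le hc0.le, ← setIntegral_union
        (Ioc_disjoint_Ioi le_rfl) measurableSet_Ioi (hIF.mono_set Ioc_subset_Ioi_self) i4,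
      Ioc_union_Ioi_eq_Ioi hc0.le]
  have b1 : (∫ t in (0:ℝ)..a, F t) ≤ Real.exp (τ ^ 2 * y) / K := by
    rw [intervalIntegral.integral_of_le ha0.le]
    calc ∫ t in Ioc 0 a, F t ≤ ∫ t in Ioc 0 a, t ^ (-(3:ℝ)/2) * L t * Real.exp (τ ^ 2 * y) := by
          refine setIntegral_mono_on (hIF.mono_set Ioc_subset_Ioi_self)
            ((hI0.mono_set Ioc_subset_Ioi_self).mul_const _) measurableSet_Ioc fun t ht => ?_
          have h0 : 0 < t := ht.1
          have hL := hLpos t h0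
          have hs := hsp t h0
          have h4 : 1 - τ ^ 2 ≤ t⁻¹ := by rw [← ha']; gcongr; exact ht.2
          have h3 : y * τ ^ 2 / (t⁻¹ + τ ^ 2) ≤ τ ^ 2 * y := by
            rw [div_le_iff₀ hs]
            have : 0 < y * τ ^ 2 := by positivity
            nlinarith
          have := hb t h0
          simp only [hF]
          gcongr
      _ ≤ ∫ t in Ioi 0, t ^ (-(3:ℝ)/2) * L t * Real.exp (τ ^ 2 * y) := by
          refine setIntegral_mono_set (hI0.mul_const _) ?_ Ioc_subset_Ioi_self.eventuallyLE
          refine (ae_restrict_iff' measurableSet_Ioi).2 (Eventually.of_forall fun t ht => ?_)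
          have h0 : 0 < t := ht
          have hL := hLpos t h0
          simp only [Pi.zero_apply]
          positivity
      _ = _ := by rw [integral_mul_const, hLint]; ring
  have b2 := aux_mid L M y τ a b hM hLle hLpos hy ha0 hab i2
  have b3 := aux_mid L M y τ b c hM hLle hLpos hy hb0 hbc i3
  have b4 := aux_tail L M y τ c hM hτ hLle hLpos hy hc0 hc' i4
  rw [hsplit]
  have s2 : Real.sqrt (c⁻¹ + τ ^ 2) = Real.sqrt 2 * τ := by
    rw [hc', ← two_mul, Real.sqrt_mul (by norm_num), Real.sqrt_sq hτ.le]
  have s1 : Real.sqrt (b⁻¹ + τ ^ 2) = Real.sqrt τ := by rw [hb'']; congr 1; ring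
  have s0 : Real.sqrt (a⁻¹ + τ ^ 2) = 1 := by rw [ha']; simp
  have x1 : y * τ ^ 2 / (b⁻¹ + τ ^ 2) = τ * y := by rw [hb'']; field_simp; simp
  have x2 : y * τ ^ 2 / (c⁻¹ + τ ^ 2) = y / 2 := by rw [hc']; field_simp; norm_num
  rw [s0, s1, x1] at b2
  rw [s1, s2, x2] at b3
  have r0 : 0 < Real.sqrt τ := Real.sqrt_pos.2 hτ
  have r1 : τ * (1 / Real.sqrt τ) = Real.sqrt τ := by
    rw [mul_one_div]; exact Real.div_sqrt
  have r2 : τ * (1 / τ) = 1 := by field_simp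
  have r3 : τ * (Real.exp (τ ^ 2 * y) / (K * τ)) = Real.exp (τ ^ 2 * y) / K := by field_simp
  refine (add_le_add (add_le_add (add_le_add b1 b2) b3) b4).trans (le_of_eq ?_)
  rw [← r3]
  linear_combination (-2 * M * Real.exp (τ * y)) * r2 + (2 * M * Real.exp (τ * y) - 2 * M * Real.exp (y / 2)) * r1
end
end
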